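/- arXiv:2312.06811 — 12 statements merged into one kernel-verified Lean document; each statement's English description precedes it below -/
import Mathlib

section
/- The set 𝓜 of all reinsurance treaties for a fixed probability measure μ on ℝ₊ⁿ is compact in the topology of weak convergence of probability measures. -/
open MeasureTheory Filter Topology Set

noncomputable section

/-- `Vec n` is the space `ℝⁿ` of loss vectors. -/
abbrev Vec (n : ℕ) : Type := Fin n → ℝ

/-- `Pt n` is the space `ℝⁿ × ℝⁿ` of pairs (original loss, reinsured amount). -/
abbrev Pt (n : ℕ) : Type := Vec n × Vec n

/-- The set `𝒜 = {(x,y) : 0 ≤ yᵢ ≤ xᵢ for all i}` on which treaties are concentrated. -/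
def treatySet (n : ℕ) : Set (Pt n) := {p | ∀ i, 0 ≤ p.2 i ∧ p.2 i ≤ p.1 i}

/-- the set 𝓜 of reinsurance treaties for a fixed probability measure `μ`
on `ℝ₊ⁿ` is compact in the topology of weak convergence. -/
theorem stmt0 (n : ℕ) (μ : Measure (Vec n)) [IsProbabilityMeasure μ]
    (hμ : μ {x | ∀ i, 0 ≤ x i} = 1) :
    IsCompact {η : ProbabilityMeasure (Pt n) |
      η.toMeasure.map Prod.fst = μ ∧ η.toMeasure (treatySet n) = 1} := by
  have hcl : IsClosed (treatySet n) := by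
    have : treatySet n = ⋂ i, ({p : Pt n | 0 ≤ p.2 i} ∩ {p : Pt n | p.2 i ≤ p.1 i}) := by
      ext p; simp [treatySet]
    rw [this]
    exact isClosed_iInter fun i => (isClosed_le (by fun_prop) (by fun_prop)).inter
      (isClosed_le (by fun_prop) (by fun_prop))
  set S := {η : ProbabilityMeasure (Pt n) |
      η.toMeasure.map Prod.fst = μ ∧ η.toMeasure (treatySet n) = 1} with hS
  have hclosed : IsClosed S := by
    have h1 : IsClosed {η : ProbabilityMeasure (Pt n) | η.toMeasure.map Prod.fst = μ} := by
      have hc := ProbabilityMeasure.continuous_map (Ω := Pt n) (Ω' := Vec n) continuous_fst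
      let ν : ProbabilityMeasure (Vec n) := ⟨μ, inferInstance⟩
      have := (isClosed_singleton (X := ProbabilityMeasure (Vec n)) (x := ν)).preimage hc
      convert this using 1
      ext η
      simp only [mem_setOf_eq, mem_preimage, mem_singleton_iff]
      exact ⟨fun h => Subtype.ext h, fun h => congrArg Subtype.val h⟩
    have h2 : IsClosed {η : ProbabilityMeasure (Pt n) | η.toMeasure (treatySet n) = 1} := by
      rw [isClosed_iff_clusterPt]
      intro η hη
      have hne : (𝓝 η ⊓ 𝓟 {η : ProbabilityMeasure (Pt n) | η.toMeasure (treatySet n) = 1}).NeBot := hη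
      have hl := ProbabilityMeasure.limsup_measure_closed_le_of_tendsto
        (L := 𝓝 η ⊓ 𝓟 {η : ProbabilityMeasure (Pt n) | η.toMeasure (treatySet n) = 1})
        (μs := id) (μ := η) (tendsto_id.mono_left inf_le_left) hcl
      have he : ∀ᶠ i in 𝓝 η ⊓ 𝓟 {η : ProbabilityMeasure (Pt n) | η.toMeasure (treatySet n) = 1},
          ((id i : ProbabilityMeasure (Pt n)) : Measure (Pt n)) (treatySet n) = 1 :=
        mem_inf_of_right (mem_principal_self _)
      rw [limsup_congr he, limsup_const] at hl
      exact le_antisymm prob_le_one hl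
    exact h1.inter h2
  rw [← hclosed.closure_eq]
  apply isCompact_closure_of_isTightMeasureSet
  rw [isTightMeasureSet_iff_exists_isCompact_measure_compl_le]
  intro ε hε
  obtain ⟨K, hK, hKε⟩ := isTightMeasureSet_iff_exists_isCompact_measure_compl_le.1
    (isTightMeasureSet_singleton (μ := μ)) ε hε
  obtain ⟨R, hR⟩ := hK.isBounded.subset_closedBall 0
  refine ⟨Metric.closedBall 0 R ×ˢ Metric.closedBall 0 R,
    (isCompact_closedBall _ _).prod (isCompact_closedBall _ _), ?_⟩
  rintro _ ⟨η, ⟨h1, h2⟩, rfl⟩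
  have h3 : η.toMeasure (treatySet n)ᶜ = 0 := (prob_compl_eq_zero_iff hcl.measurableSet).2 h2
  calc η.toMeasure (Metric.closedBall 0 R ×ˢ Metric.closedBall 0 R)ᶜ
      ≤ η.toMeasure (Prod.fst ⁻¹' Kᶜ ∪ (treatySet n)ᶜ) := by
        apply measure_mono
        rw [← compl_subset_compl, compl_compl, compl_union, compl_compl, ← preimage_compl, compl_compl]
        rintro ⟨x, y⟩ ⟨hx, hy⟩
        have hx' := hR hx
        refine ⟨hx', ?_⟩
        simp only [mem_closedBall_zero_iff] at hx' ⊢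
        refine le_trans ?_ hx'
        refine (pi_norm_le_iff_of_nonneg (norm_nonneg _)).2 fun i => ?_
        refine le_trans ?_ (norm_le_pi_norm x i)
        have := hy i
        simp only at this
        rw [Real.norm_of_nonneg this.1, Real.norm_of_nonneg (this.1.trans this.2)]
        exact this.2
    _ ≤ η.toMeasure (Prod.fst ⁻¹' Kᶜ) + η.toMeasure (treatySet n)ᶜ := measure_union_le _ _
    _ = μ Kᶜ := by
        rw [h3, add_zero, ← h1, Measure.map_apply measurable_fst hK.measurableSet.compl]
    _ ≤ ε := hKε μ rfl
end
end

section
/- If 𝒫 : 𝓜 → ℝ is lower semi-continuous and 𝒮 ⊆ 𝓜 is closed and nonempty, then there exists η* ∈ 𝒮 with 𝒫(η*) = min_{η ∈ 𝒮} 𝒫(η); that is, an optimal reinsurance treaty exists. -/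
open MeasureTheory Filter Topology Set

noncomputable section

theorem tight_aux (n : ℕ) (μ : Measure (Vec n)) [IsProbabilityMeasure μ] :
    IsTightMeasureSet {((η : ProbabilityMeasure (Pt n)) : Measure (Pt n)) | η ∈
      {η : ProbabilityMeasure (Pt n) |
      η.toMeasure.map Prod.fst = μ ∧ η.toMeasure (treatySet n) = 1}} := by
  have hμt : IsTightMeasureSet {μ} := isTightMeasureSet_singleton
  rw [isTightMeasureSet_iff_exists_isCompact_measure_compl_le] at hμt ⊢
  intro ε hε
  obtain ⟨K, hK, hKε⟩ := hμt ε hε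
  obtain ⟨r, hr⟩ := hK.isBounded.subset_closedBall 0
  refine ⟨K ×ˢ Metric.closedBall 0 r, hK.prod (isCompact_closedBall 0 r), ?_⟩
  rintro _ ⟨η, ⟨hη1, hη2⟩, rfl⟩
  have hmeas : MeasurableSet (treatySet n) := by
    have : treatySet n = ⋂ i, ({p : Pt n | 0 ≤ p.2 i} ∩ {p : Pt n | p.2 i ≤ p.1 i}) := by
      ext p; simp [treatySet]
    rw [this]
    refine MeasurableSet.iInter fun i => MeasurableSet.inter ?_ ?_
    · exact (isClosed_le (by fun_prop) (by fun_prop)).measurableSet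
    · exact (isClosed_le (by fun_prop) (by fun_prop)).measurableSet
  have hc : (η : Measure (Pt n)) (treatySet n)ᶜ = 0 := (prob_compl_eq_zero_iff hmeas).2 hη2
  have hsub : (K ×ˢ Metric.closedBall (0 : Vec n) r)ᶜ ⊆ (Prod.fst ⁻¹' Kᶜ) ∪ (treatySet n)ᶜ := by
    intro p hp
    by_contra hcon
    simp only [mem_union, mem_preimage, mem_compl_iff, not_or, not_not] at hcon
    apply hp
    refine ⟨hcon.1, ?_⟩
    have h1 := hr hcon.1
    rw [mem_closedBall_zero_iff] at h1 ⊢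
    refine le_trans ((pi_norm_le_iff_of_nonneg (norm_nonneg _)).2 fun i => ?_) h1
    refine le_trans ?_ (norm_le_pi_norm p.1 i)
    have := hcon.2 i
    rw [Real.norm_eq_abs, Real.norm_eq_abs, abs_of_nonneg this.1]
    exact this.2.trans (le_abs_self _)
  calc (η : Measure (Pt n)) (K ×ˢ Metric.closedBall (0 : Vec n) r)ᶜ
      ≤ (η : Measure (Pt n)) (Prod.fst ⁻¹' Kᶜ) + (η : Measure (Pt n)) (treatySet n)ᶜ :=
        (measure_mono hsub).trans (measure_union_le _ _)
    _ = μ Kᶜ := by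
        rw [hc, add_zero, ← hη1, Measure.map_apply measurable_fst hK.measurableSet.compl]
    _ ≤ ε := hKε μ rfl

/-- if `𝒫` is lower semi-continuous on the set `𝓜` of reinsurance
treaties (with the weak topology) and `𝒮 ⊆ 𝓜` is closed and nonempty, then an
optimal reinsurance treaty exists, i.e. `𝒫` attains its minimum over `𝒮`. -/
theorem stmt1 (n : ℕ) (μ : Measure (Vec n)) [IsProbabilityMeasure μ]
    (hμ : μ {x | ∀ i, 0 ≤ x i} = 1)
    (M : Set (ProbabilityMeasure (Pt n)))
    (hM : M = {η : ProbabilityMeasure (Pt n) |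
      η.toMeasure.map Prod.fst = μ ∧ η.toMeasure (treatySet n) = 1})
    (P : ProbabilityMeasure (Pt n) → ℝ) (hP : LowerSemicontinuousOn P M)
    (S : Set (ProbabilityMeasure (Pt n))) (hSM : S ⊆ M) (hScl : IsClosed S)
    (hSne : S.Nonempty) :
    ∃ ηs ∈ S, ∀ η ∈ S, P ηs ≤ P η := by
  have hT := tight_aux n μ
  rw [← hM] at hT
  have hC : IsCompact S :=
    (isCompact_closure_of_isTightMeasureSet hT).of_isClosed_subset hScl
      (hSM.trans subset_closure)
  obtain ⟨η, hη, h⟩ := (hP.mono hSM).exists_isMinOn hSne hC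
  exact ⟨η, hη, fun η' h' => h h'⟩
end
end

section
/- Let 𝒮 = {η ∈ 𝓜 : 𝒢(η) ≤ 0} for a function 𝒢 : 𝓜 → ℝᵐ, and let η* ∈ 𝒮 minimize 𝒫 over 𝒮. Let 𝒟 = {η ∈ 𝓜 : d𝒫(η*; η − η*) and d𝒢(η*; η − η*) exist}, and suppose 𝒞 ⊆ 𝒟 satisfies: η* ∈ 𝒞, 𝒞 is convex, and for all η₁, η₂ ∈ 𝒞 and 0 ≤ t ≤ 1, d𝒫(η*; (1−t)η₁ + tη₂ − η*) = (1−t)·d𝒫(η*; η₁ − η*) + t·d𝒫(η*; η₂ − η*), and similarly for d𝒢. Then there exist r* ≥ 0 and λ* ∈ ℝ₊ᵐ, not both zero, such that λ* · 𝒢(η*) = 0 and r*·d𝒫(η*; η − η*) + λ* · d𝒢(η*; η − η*) ≥ 0 for every η ∈ 𝒞. -/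
open MeasureTheory Filter Topology Set

noncomputable section

/-- A reinsurance treaty for `μ`: a probability measure on `ℝ₊ⁿ × ℝ₊ⁿ` with first
marginal `μ` giving full measure to `𝒜`. -/
def IsTreaty (n : ℕ) (μ : Measure (Vec n)) (η : Measure (Pt n)) : Prop :=
  IsProbabilityMeasure η ∧ η.map Prod.fst = μ ∧ η (treatySet n) = 1

/-- The convex combination `(1-t)·η + t·ϑ` of two measures. -/
def combo {α : Type*} [MeasurableSpace α] (η ϑ : Measure α) (t : ℝ) : Measure α :=
  ENNReal.ofReal (1 - t) • η + ENNReal.ofReal t • ϑ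

/-- `HasDirDeriv P η ϑ L` : the directional derivative of `P` at `η` in the
direction `ϑ - η` exists and equals `L`, i.e. `(P(η + t(ϑ - η)) - P(η))/t → L`
as `t → 0⁺`. -/
def HasDirDeriv {α : Type*} [MeasurableSpace α] (P : Measure α → ℝ)
    (η ϑ : Measure α) (L : ℝ) : Prop :=
  Tendsto (fun t : ℝ => (P (combo η ϑ t) - P η) / t) (𝓝[>] 0) (𝓝 L)

/-- Lagrange-multiplier (KKT-type) conditions for an optimal
reinsurance treaty `η*` minimizing `𝒫` over `𝒮 = {η ∈ 𝓜 : 𝒢(η) ≤ 0}`.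
`dP η` and `dG η` denote the directional derivatives `d𝒫(η*; η − η*)` and
`d𝒢(η*; η − η*)`, assumed to exist and to be convex linear on a convex set
`𝒞 ∋ η*`.  Then there are multipliers `r* ≥ 0`, `λ* ∈ ℝ₊ᵐ`, not both zero, with
`λ*·𝒢(η*) = 0` and `r*·d𝒫(η*; η−η*) + λ*·d𝒢(η*; η−η*) ≥ 0` for all `η ∈ 𝒞`. -/
theorem stmt2 (n m : ℕ) (μ : Measure (Vec n)) [IsProbabilityMeasure μ]
    (P : Measure (Pt n) → ℝ) (G : Measure (Pt n) → Fin m → ℝ)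
    (ηs : Measure (Pt n)) (hηs : IsTreaty n μ ηs) (hGs : ∀ i, G ηs i ≤ 0)
    (hopt : ∀ η, IsTreaty n μ η → (∀ i, G η i ≤ 0) → P ηs ≤ P η)
    (C : Set (Measure (Pt n))) (hCsub : ∀ η ∈ C, IsTreaty n μ η)
    (hηsC : ηs ∈ C)
    (hCconv : ∀ η₁ ∈ C, ∀ η₂ ∈ C, ∀ t ∈ Icc (0:ℝ) 1, combo η₁ η₂ t ∈ C)
    (dP : Measure (Pt n) → ℝ) (dG : Measure (Pt n) → Fin m → ℝ)
    (hdP : ∀ η ∈ C, HasDirDeriv P ηs η (dP η))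
    (hdG : ∀ η ∈ C, ∀ i, HasDirDeriv (fun ξ => G ξ i) ηs η (dG η i))
    (hPlin : ∀ η₁ ∈ C, ∀ η₂ ∈ C, ∀ t ∈ Icc (0:ℝ) 1,
      dP (combo η₁ η₂ t) = (1 - t) * dP η₁ + t * dP η₂)
    (hGlin : ∀ η₁ ∈ C, ∀ η₂ ∈ C, ∀ t ∈ Icc (0:ℝ) 1, ∀ i,
      dG (combo η₁ η₂ t) i = (1 - t) * dG η₁ i + t * dG η₂ i) :
    ∃ (r : ℝ) (l : Fin m → ℝ), 0 ≤ r ∧ (∀ i, 0 ≤ l i) ∧ ¬(r = 0 ∧ l = 0) ∧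
      (∑ i, l i * G ηs i) = 0 ∧
      ∀ η ∈ C, 0 ≤ r * dP η + ∑ i, l i * dG η i := by
  classical
  have hself : ∀ t ∈ Icc (0:ℝ) 1, combo ηs ηs t = ηs := by
    intro t ht
    unfold combo
    rw [← add_smul, ← ENNReal.ofReal_add (by linarith [ht.2]) ht.1]
    simp
  have hev : ∀ᶠ t in 𝓝[>] (0:ℝ), 0 < t ∧ t < 1 := Ioo_mem_nhdsGT one_pos
  have hdP0 : dP ηs = 0 := by
    refine tendsto_nhds_unique (hdP ηs hηsC) ?_
    refine tendsto_const_nhds.congr' ?_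
    filter_upwards [hev] with t ht
    rw [hself t ⟨ht.1.le, ht.2.le⟩]; simp
  have hdG0 : ∀ i, dG ηs i = 0 := by
    intro i
    refine tendsto_nhds_unique (hdG ηs hηsC i) ?_
    refine tendsto_const_nhds.congr' ?_
    filter_upwards [hev] with t ht
    rw [hself t ⟨ht.1.le, ht.2.le⟩]; simp
  have hkey : ∀ η ∈ C, dP η < 0 → (∀ i, G ηs i + dG η i < 0) → False := by
    intro η hη h1 h2
    have e1 : ∀ᶠ t in 𝓝[>] (0:ℝ), (P (combo ηs η t) - P ηs) / t < 0 :=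
      (hdP η hη).eventually (gt_mem_nhds h1)
    have e2 : ∀ᶠ t in 𝓝[>] (0:ℝ), ∀ i, (G (combo ηs η t) i - G ηs i) / t < - G ηs i := by
      rw [eventually_all]
      intro i
      exact (hdG η hη i).eventually (gt_mem_nhds (by linarith [h2 i]))
    obtain ⟨t, ⟨t0, t1⟩, a1, a2⟩ := (hev.and (e1.and e2)).exists
    have hc := hCconv ηs hηsC η hη t ⟨t0.le, t1.le⟩
    have := hopt _ (hCsub _ hc) (fun i => by
      have h := a2 i
      rw [div_lt_iff₀ t0] at h
      nlinarith [hGs i])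
    rw [div_lt_iff₀ t0] at a1
    linarith
  let A : Set (ℝ × (Fin m → ℝ)) :=
    {p | ∃ η ∈ C, dP η < p.1 ∧ ∀ i, G ηs i + dG η i < p.2 i}
  have hAopen : IsOpen A := by
    have : A = ⋃ η ∈ C, (Ioi (dP η)) ×ˢ (Set.pi univ (fun i => Ioi (G ηs i + dG η i))) := by
      ext p; simp [A, and_left_comm]
    rw [this]
    exact isOpen_biUnion fun η _ => isOpen_Ioi.prod (isOpen_set_pi finite_univ fun i _ => isOpen_Ioi)
  have hAconv : Convex ℝ A := by
    rintro p ⟨η₁, h1, p1, p2⟩ q ⟨η₂, h2, q1, q2⟩ a b ha hb hab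
    have hb1 : b ∈ Icc (0:ℝ) 1 := ⟨hb, by linarith⟩
    have hlt : ∀ x y u v : ℝ, x < u → y < v → a * x + b * y < a * u + b * v := by
      intro x y u v hx hy
      rcases ha.eq_or_lt with h | h
      · subst h
        have : b = 1 := by linarith
        subst this; linarith
      · nlinarith [mul_lt_mul_of_pos_left hx h, mul_le_mul_of_nonneg_left hy.le hb]
    have ha' : 1 - b = a := by linarith
    refine ⟨combo η₁ η₂ b, hCconv _ h1 _ h2 b hb1, ?_, fun i => ?_⟩
    · rw [hPlin _ h1 _ h2 b hb1, ha']
      exact hlt _ _ _ _ p1 q1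
    · rw [hGlin _ h1 _ h2 b hb1 i, ha']
      have := hlt _ _ _ _ (p2 i) (q2 i)
      simp only [Prod.snd_add, Prod.smul_snd, Pi.add_apply, Pi.smul_apply, smul_eq_mul]
      have e : G ηs i = a * G ηs i + b * G ηs i := by rw [← add_mul, hab, one_mul]
      linarith
  have h0 : (0 : ℝ × (Fin m → ℝ)) ∉ A := by
    rintro ⟨η, h, h1, h2⟩
    exact hkey η h h1 h2
  obtain ⟨f, hf⟩ := geometric_hahn_banach_point_open hAconv hAopen h0
  rw [map_zero] at hf
  let r : ℝ := f (1, 0)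
  let l : Fin m → ℝ := fun i => f (0, Pi.single i 1)
  have hrep : ∀ (a : ℝ) (b : Fin m → ℝ), f (a, b) = r * a + ∑ i, l i * b i := by
    intro a b
    have : ((a, b) : ℝ × (Fin m → ℝ)) =
        a • (1, 0) + ∑ i, b i • ((0, Pi.single i 1) : ℝ × (Fin m → ℝ)) := by
      ext j
      · simp [Prod.fst_sum]
      · simp [Prod.snd_sum, Finset.sum_apply, Pi.single_apply]
    rw [this]
    simp only [map_add, map_sum, map_smul, smul_eq_mul, r, l]
    rw [mul_comm]
    congr 1
    exact Finset.sum_congr rfl fun i _ => mul_comm _ _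
  have hpos : ∀ η ∈ C, ∀ (a : ℝ) (b : Fin m → ℝ), dP η < a → (∀ i, G ηs i + dG η i < b i) →
      0 < r * a + ∑ i, l i * b i := by
    intro η h a b h1 h2
    rw [← hrep]
    exact hf (a, b) ⟨η, h, h1, h2⟩
  have hlin : ∀ x y : ℝ, (∀ s : ℝ, 0 ≤ s → 0 < x + s * y) → 0 ≤ y := by
    intro x y h
    by_contra hy
    push Not at hy
    have hx := h 0 le_rfl
    have := h (x / -y) (div_nonneg (by linarith) (by linarith))
    have e : x / -y * y = -x := by have := hy.ne; field_simp
    rw [e] at this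
    linarith
  have hr : 0 ≤ r := by
    refine hlin (r * 1 + ∑ i, l i * 1) r fun s hs => ?_
    have := hpos ηs hηsC (1 + s) (fun _ => 1) (by linarith) (fun i => by linarith [hGs i, hdG0 i])
    linarith
  have hl : ∀ i, 0 ≤ l i := by
    intro j
    refine hlin (r * 1 + ∑ i, l i * 1) (l j) fun s hs => ?_
    have := hpos ηs hηsC 1 (fun i => 1 + if i = j then s else 0) (by linarith) (fun i => by
      have : 0 ≤ if i = j then s else 0 := by split_ifs <;> simp [hs]
      linarith [hGs i, hdG0 i])
    simp only [mul_add, Finset.sum_add_distrib, mul_ite, mul_zero, Finset.sum_ite_eq',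
      Finset.sum_ite_eq, Finset.mem_univ, if_true] at this
    linarith
  have hge : ∀ η ∈ C, 0 ≤ r * dP η + ∑ i, l i * (G ηs i + dG η i) := by
    intro η h
    have hc : Tendsto (fun e : ℝ => r * (dP η + e) + ∑ i, l i * (G ηs i + dG η i + e))
        (𝓝[>] 0) (𝓝 (r * (dP η + 0) + ∑ i, l i * (G ηs i + dG η i + 0))) := by
      have : Continuous (fun e : ℝ => r * (dP η + e) + ∑ i, l i * (G ηs i + dG η i + e)) := by
        fun_prop
      exact (this.tendsto 0).mono_left nhdsWithin_le_nhds
    simp only [add_zero] at hc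
    refine ge_of_tendsto hc ?_
    filter_upwards [hev] with e he
    exact (hpos η h _ _ (by linarith [he.1]) (fun i => by linarith [he.1])).le
  have hcs : ∑ i, l i * G ηs i = 0 := by
    apply le_antisymm
    · exact Finset.sum_nonpos fun i _ => mul_nonpos_of_nonneg_of_nonpos (hl i) (hGs i)
    · have := hge ηs hηsC
      simpa [hdP0, hdG0] using this
  refine ⟨r, l, hr, hl, ?_, hcs, fun η h => ?_⟩
  · rintro ⟨h1, h2⟩
    have := hpos ηs hηsC 1 (fun _ => 1) (by linarith) (fun i => by linarith [hGs i, hdG0 i])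
    rw [h1, h2] at this
    simp at this
  · have := hge η h
    simp only [mul_add, Finset.sum_add_distrib, hcs, zero_add] at this
    exact this
end
end

section
/- In the setting of the Lagrange multiplier proposition for reinsurance (𝒮 = {η ∈ 𝓜 : 𝒢(η) ≤ 0}, η* optimal, 𝒞 ⊆ 𝒟 convex containing η* with convex-linear directional derivatives of 𝒫 and 𝒢 at η*), if in addition either 𝒢 is constant on 𝒞, or there exists η ∈ 𝒞 with 𝒢(η*) + d𝒢(η*; η − η*) < 0 (componentwise), then the multiplier r* in the conclusion r*·d𝒫(η*; η − η*) + λ* · d𝒢(η*; η − η*) ≥ 0 for all η ∈ 𝒞 can be chosen strictly positive (equivalently, equal to 1). -/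
open MeasureTheory Filter Topology Set

noncomputable section

lemma aux_sep {m : ℕ} {ι : Type*} (C : Set ι) (p : ι → ℝ) (g : ι → Fin m → ℝ)
    (hconv : ∀ a ∈ C, ∀ b ∈ C, ∀ t ∈ Icc (0:ℝ) 1, ∃ c ∈ C,
      p c = (1 - t) * p a + t * p b ∧ ∀ i, g c i = (1 - t) * g a i + t * g b i)
    (hpos : ∀ a ∈ C, (∀ i, g a i < 0) → 0 ≤ p a)
    (hsl : ∃ a ∈ C, ∀ i, g a i < 0) :
    ∃ l : Fin m → ℝ, (∀ i, 0 ≤ l i) ∧ ∀ a ∈ C, 0 ≤ p a + ∑ i, l i * g a i := by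
  obtain ⟨s, hsC, hs⟩ := hsl
  let A : Set ((Fin m → ℝ) × ℝ) := {x | ∃ a ∈ C, (∀ i, g a i < x.1 i) ∧ p a < x.2}
  have hAconv : Convex ℝ A := by
    rintro x ⟨a, haC, ha1, ha2⟩ y ⟨b, hbC, hb1, hb2⟩ u v hu hv huv
    obtain ⟨c, hcC, hc1, hc2⟩ := hconv a haC b hbC v ⟨hv, by linarith⟩
    have hu' : 1 - v = u := by linarith
    rw [hu'] at hc1 hc2
    have key : ∀ a1 b1 x1 y1 : ℝ, a1 < x1 → b1 < y1 → u * a1 + v * b1 < u * x1 + v * y1 := by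
      intro a1 b1 x1 y1 h1 h2
      rcases hu.eq_or_lt with h | h
      · have : v = 1 := by linarith
        subst this; rw [← h]; linarith
      · have := mul_lt_mul_of_pos_left h1 h
        have := mul_le_mul_of_nonneg_left h2.le hv
        linarith
    refine ⟨c, hcC, fun i => ?_, ?_⟩
    · rw [hc2]; simpa using key _ _ _ _ (ha1 i) (hb1 i)
    · rw [hc1]; simpa using key _ _ _ _ ha2 hb2
  have hAopen : IsOpen A := by
    have : A = ⋃ a ∈ C, ((⋂ i, {x : (Fin m → ℝ) × ℝ | g a i < x.1 i}) ∩ {x | p a < x.2}) := by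
      ext x
      simp only [A, mem_setOf_eq, mem_iUnion, mem_inter_iff, mem_iInter, exists_prop]
    rw [this]
    refine isOpen_biUnion fun a _ => IsOpen.inter (isOpen_iInter_of_finite fun i => ?_) ?_
    · exact isOpen_lt continuous_const (by fun_prop)
    · exact isOpen_lt continuous_const (by fun_prop)
  have h0 : (0 : (Fin m → ℝ) × ℝ) ∉ A := by
    rintro ⟨a, haC, h1, h2⟩
    exact absurd (hpos a haC h1) (not_le.mpr h2)
  obtain ⟨f, hf⟩ := geometric_hahn_banach_open_point hAconv hAopen h0
  rw [map_zero] at hf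
  let w : Fin m → ℝ := fun i => - f (Pi.single i 1, 0)
  let r : ℝ := - f (0, 1)
  have hrep : ∀ x : (Fin m → ℝ) × ℝ, f x = - (r * x.2 + ∑ i, w i * x.1 i) := by
    intro x
    have hx : x = (∑ i, x.1 i • ((Pi.single i 1, 0) : (Fin m → ℝ) × ℝ)) + x.2 • ((0, 1) : (Fin m → ℝ) × ℝ) := by
      refine Prod.ext ?_ ?_
      · ext j
        simp [Prod.fst_sum, Finset.sum_apply, Pi.single_apply]
      · simp [Prod.snd_sum]
    conv_lhs => rw [hx]
    rw [map_add, map_sum]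
    simp only [map_smul, smul_eq_mul, w, r, neg_mul, Finset.sum_neg_distrib]
    rw [Finset.sum_congr rfl fun i _ => mul_comm (x.1 i) _]
    ring
  have hA : ∀ a ∈ C, ∀ d : Fin m → ℝ, (∀ i, 0 < d i) → ∀ e : ℝ, 0 < e →
      0 < r * (p a + e) + ∑ i, w i * (g a i + d i) := by
    intro a ha d hd e he
    have := hf (g a + d, p a + e) ⟨a, ha, fun i => by simpa using hd i, by simpa using he⟩
    rw [hrep] at this
    exact neg_lt_zero.mp this
  have lin : ∀ A B : ℝ, (∀ k : ℝ, 0 ≤ k → 0 < A + k * B) → 0 ≤ B := by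
    intro A B h
    by_contra hB
    push Not at hB
    have h1 := h (|A| / (-B)) (div_nonneg (abs_nonneg _) (by linarith))
    have : |A| / (-B) * B = -|A| := by
      have hB0 : B ≠ 0 := hB.ne
      field_simp
    have h2 := le_abs_self A
    linarith
  have hw : ∀ i, 0 ≤ w i := by
    intro i
    refine lin (r * (p s + 1) + ∑ j, w j * (g s j + 1)) _ fun k hk => ?_
    have := hA s hsC (fun j => 1 + if j = i then k else 0)
      (fun j => by split_ifs <;> linarith) 1 one_pos
    simp only [← add_assoc] at this
    simp_rw [mul_add (w _) (g s _ + 1)] at this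
    rw [Finset.sum_add_distrib] at this
    simp at this
    linarith
  have hr : 0 ≤ r := by
    refine lin (r * (p s + 1) + ∑ j, w j * (g s j + 1)) _ fun k hk => ?_
    have := hA s hsC (fun j => 1) (fun j => one_pos) (1 + k) (by linarith)
    linarith
  have hmain : ∀ a ∈ C, 0 ≤ r * p a + ∑ i, w i * g a i := by
    intro a ha
    have hS : 0 ≤ r + ∑ i, w i := add_nonneg hr (Finset.sum_nonneg fun i _ => hw i)
    by_contra hneg
    push Not at hneg
    have hS1 : 0 < r + ∑ i, w i + 1 := by linarith
    set N := r * p a + ∑ i, w i * g a i with hN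
    have he : 0 < -N / (r + ∑ i, w i + 1) := div_pos (by linarith) hS1
    set e := -N / (r + ∑ i, w i + 1) with hedef
    have h1 := hA a ha (fun _ => e) (fun _ => he) e he
    have h2 : e * (r + ∑ i, w i + 1) = -N := by rw [hedef]; field_simp
    simp_rw [mul_add (w _)] at h1
    rw [Finset.sum_add_distrib, ← Finset.sum_mul] at h1
    nlinarith
  have hrpos : 0 < r := by
    rcases hr.eq_or_lt with h | h
    · exfalso
      have h1 := hmain s hsC
      rw [← h, zero_mul, zero_add] at h1
      have h2 : ∀ i ∈ Finset.univ, w i * g s i ≤ 0 := fun i _ =>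
        mul_nonpos_of_nonneg_of_nonpos (hw i) (hs i).le
      have h3 := (Finset.sum_eq_zero_iff_of_nonpos h2).mp (le_antisymm (Finset.sum_nonpos h2) h1)
      have h4 : ∀ i, w i = 0 := fun i =>
        (mul_eq_zero.mp (h3 i (Finset.mem_univ i))).resolve_right (hs i).ne
      have h5 := hA s hsC (fun _ => 1) (fun _ => one_pos) 1 one_pos
      simp [h4, ← h] at h5
    · exact h
  refine ⟨fun i => w i / r, fun i => div_nonneg (hw i) hr, fun a ha => ?_⟩
  have h1 := div_nonneg (hmain a ha) hr
  have : p a + ∑ i, w i / r * g a i = (r * p a + ∑ i, w i * g a i) / r := by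
    rw [add_div, Finset.sum_div, mul_div_cancel_left₀ _ hrpos.ne']
    congr 1
    exact Finset.sum_congr rfl fun i _ => by ring
  rw [this]; exact h1

lemma combo_self_aux {α : Type*} [MeasurableSpace α] (η : Measure α) (t : ℝ)
    (ht : t ∈ Icc (0:ℝ) 1) : combo η η t = η := by
  unfold combo
  rw [← add_smul, ← ENNReal.ofReal_add (by linarith [ht.2]) ht.1]
  simp

lemma ev_Icc_aux : ∀ᶠ t : ℝ in 𝓝[>] 0, 0 < t ∧ t ≤ 1 := by
  filter_upwards [Ioc_mem_nhdsGT (zero_lt_one' ℝ)] with t ht using ht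

lemma dir_self_aux {α : Type*} [MeasurableSpace α] (P : Measure α → ℝ) (η : Measure α) (L : ℝ)
    (h : HasDirDeriv P η η L) : L = 0 := by
  refine tendsto_nhds_unique h (tendsto_const_nhds.congr' ?_)
  filter_upwards [ev_Icc_aux] with t ht
  rw [combo_self_aux η t ⟨ht.1.le, ht.2⟩]; simp

lemma dir_nonneg_aux {α : Type*} [MeasurableSpace α] (P : Measure α → ℝ) (η ϑ : Measure α) (L : ℝ)
    (h : HasDirDeriv P η ϑ L) (h2 : ∀ᶠ t in 𝓝[>] (0:ℝ), P η ≤ P (combo η ϑ t)) : 0 ≤ L := by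
  refine ge_of_tendsto h ?_
  filter_upwards [ev_Icc_aux, h2] with t ht h3
  exact div_nonneg (by linarith) ht.1.le

/-- in the Lagrange-multiplier setting for reinsurance, if in
addition either `𝒢` is constant on `𝒞`, or there is `η ∈ 𝒞` with
`𝒢(η*) + d𝒢(η*; η − η*) < 0` componentwise, then the multiplier `r*` can be
chosen strictly positive, equivalently equal to `1`:  there is `λ* ∈ ℝ₊ᵐ` with
`λ*·𝒢(η*) = 0` and `d𝒫(η*; η−η*) + λ*·d𝒢(η*; η−η*) ≥ 0` for all `η ∈ 𝒞`. -/
theorem stmt3 (n m : ℕ) (μ : Measure (Vec n)) [IsProbabilityMeasure μ]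
    (P : Measure (Pt n) → ℝ) (G : Measure (Pt n) → Fin m → ℝ)
    (ηs : Measure (Pt n)) (hηs : IsTreaty n μ ηs) (hGs : ∀ i, G ηs i ≤ 0)
    (hopt : ∀ η, IsTreaty n μ η → (∀ i, G η i ≤ 0) → P ηs ≤ P η)
    (C : Set (Measure (Pt n))) (hCsub : ∀ η ∈ C, IsTreaty n μ η)
    (hηsC : ηs ∈ C)
    (hCconv : ∀ η₁ ∈ C, ∀ η₂ ∈ C, ∀ t ∈ Icc (0:ℝ) 1, combo η₁ η₂ t ∈ C)
    (dP : Measure (Pt n) → ℝ) (dG : Measure (Pt n) → Fin m → ℝ)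
    (hdP : ∀ η ∈ C, HasDirDeriv P ηs η (dP η))
    (hdG : ∀ η ∈ C, ∀ i, HasDirDeriv (fun ξ => G ξ i) ηs η (dG η i))
    (hPlin : ∀ η₁ ∈ C, ∀ η₂ ∈ C, ∀ t ∈ Icc (0:ℝ) 1,
      dP (combo η₁ η₂ t) = (1 - t) * dP η₁ + t * dP η₂)
    (hGlin : ∀ η₁ ∈ C, ∀ η₂ ∈ C, ∀ t ∈ Icc (0:ℝ) 1, ∀ i,
      dG (combo η₁ η₂ t) i = (1 - t) * dG η₁ i + t * dG η₂ i)
    (hreg : (∀ η₁ ∈ C, ∀ η₂ ∈ C, G η₁ = G η₂) ∨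
      (∃ η ∈ C, ∀ i, G ηs i + dG η i < 0)) :
    ∃ l : Fin m → ℝ, (∀ i, 0 ≤ l i) ∧ (∑ i, l i * G ηs i) = 0 ∧
      ∀ η ∈ C, 0 ≤ dP η + ∑ i, l i * dG η i := by
  rcases hreg with hc | hsl
  · refine ⟨0, fun i => le_rfl, by simp, fun η hη => ?_⟩
    have : 0 ≤ dP η := by
      refine dir_nonneg_aux P ηs η _ (hdP η hη) ?_
      filter_upwards [ev_Icc_aux] with t ht
      have hm := hCconv ηs hηsC η hη t ⟨ht.1.le, ht.2⟩
      refine hopt _ (hCsub _ hm) ?_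
      rw [hc _ hm _ hηsC]
      exact hGs
    simpa using this
  · obtain ⟨l, hl, hmain⟩ := aux_sep C dP (fun η i => G ηs i + dG η i)
      (fun a ha b hb t ht => ⟨combo a b t, hCconv a ha b hb t ht, hPlin a ha b hb t ht,
        fun i => by rw [hGlin a ha b hb t ht i]; ring⟩)
      (fun η hη hneg => by
        refine dir_nonneg_aux P ηs η _ (hdP η hη) ?_
        have hev : ∀ᶠ t in 𝓝[>] (0:ℝ), ∀ i,
            (G (combo ηs η t) i - G ηs i) / t < - G ηs i := by
          rw [eventually_all]
          intro i
          exact (hdG η hη i).eventually_lt_const (by linarith [hneg i])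
        filter_upwards [ev_Icc_aux, hev] with t ht h3
        have hm := hCconv ηs hηsC η hη t ⟨ht.1.le, ht.2⟩
        refine hopt _ (hCsub _ hm) fun i => ?_
        have h4 := (div_lt_iff₀ ht.1).mp (h3 i)
        nlinarith [hGs i, ht.2]) hsl
    have hle : ∀ i ∈ Finset.univ, l i * G ηs i ≤ 0 := fun i _ =>
      mul_nonpos_of_nonneg_of_nonpos (hl i) (hGs i)
    have hz : ∑ i, l i * G ηs i = 0 := by
      refine le_antisymm (Finset.sum_nonpos hle) ?_
      have h := hmain ηs hηsC
      have e1 : dP ηs = 0 := dir_self_aux P ηs _ (hdP ηs hηsC)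
      have e2 : ∀ i, dG ηs i = 0 := fun i => dir_self_aux _ ηs _ (hdG ηs hηsC i)
      simpa [e1, e2] using h
    refine ⟨l, hl, hz, fun η hη => ?_⟩
    have h := hmain η hη
    simp_rw [mul_add] at h
    rw [Finset.sum_add_distrib, hz, zero_add] at h
    exact h
end
end

section
/- Let η* ∈ 𝓜 and let (x,y) ∈ 𝒜 with 0 < y < x (componentwise strict inequalities). For t ∈ ℝⁿ with −y < t < x − y and ε ≥ 0, define the measure η_{x,y,t,ε} on ℝ₊ⁿ × ℝ₊ⁿ by η_{x,y,t,ε}(A) = η*(A) − η*(A ∩ B_ε(x,y)) + η*((A − (0,t)) ∩ B_ε(x,y)), where B_ε(x,y) is the open ball of radius ε about (x,y) and A − (0,t) is the translate of A by −(0,t). Let δ = min{ d((x,y), ∂𝒜), d((x,y), ∂𝒜 − (0,t)) }. Then δ > 0, and for every 0 ≤ ε < δ the measure η_{x,y,t,ε} is again a reinsurance treaty, i.e. η_{x,y,t,ε} ∈ 𝓜. -/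
open MeasureTheory Filter Topology Set

noncomputable section

theorem aux_conn {X : Type*} [TopologicalSpace X] {s A : Set X} (hs : IsPreconnected s)
    (h1 : (s ∩ A).Nonempty) (h2 : (s ∩ Aᶜ).Nonempty) : (s ∩ frontier A).Nonempty := by
  by_contra hne
  have hf : ∀ z ∈ s, z ∉ frontier A := fun z hz hzf => hne ⟨z, hz, hzf⟩
  obtain ⟨p, hp, hpA⟩ := h1
  obtain ⟨q, hq, hqA⟩ := h2
  have hu : ∀ z ∈ s, z ∈ closure A → z ∈ interior A := fun z hz hzc => by
    by_contra h
    exact hf z hz ⟨hzc, h⟩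
  obtain ⟨z, -, hz1, hz2⟩ := hs (interior A) (closure A)ᶜ isOpen_interior
    isClosed_closure.isOpen_compl
    (fun z hz => by
      by_cases h : z ∈ closure A
      · exact Or.inl (hu z hz h)
      · exact Or.inr h)
    ⟨p, hp, hu p hp (subset_closure hpA)⟩
    ⟨q, hq, fun h => hqA (interior_subset (hu q hq h))⟩
  exact hz2 (subset_closure (interior_subset hz1))

theorem aux_ball {n : ℕ} (A : Set (Pt n)) (p : Pt n) (hp : p ∈ interior A)
    (hne : (frontier A).Nonempty) :
    0 < Metric.infDist p (frontier A) ∧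
    ∀ ε : ℝ, ε < Metric.infDist p (frontier A) → Metric.ball p ε ⊆ A := by
  constructor
  · exact (isClosed_frontier.notMem_iff_infDist_pos hne).1 (fun h => h.2 hp)
  · intro ε hε q hq
    by_contra hqA
    have hpos : 0 < ε := lt_of_le_of_lt dist_nonneg (Metric.mem_ball.1 hq)
    have hc : IsPreconnected (Metric.ball p ε) := (convex_ball p ε).isPreconnected
    obtain ⟨z, hz, hzf⟩ := aux_conn hc
      ⟨p, Metric.mem_ball_self hpos, interior_subset hp⟩ ⟨q, hq, hqA⟩
    have h1 := Metric.infDist_le_dist_of_mem (x := p) hzf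
    rw [Metric.mem_ball, dist_comm] at hz
    linarith

theorem aux_closed (n : ℕ) : IsClosed (treatySet n) := by
  have : treatySet n = ⋂ i, ({p : Pt n | 0 ≤ p.2 i} ∩ {p : Pt n | p.2 i ≤ p.1 i}) := by
    ext p; simp [treatySet]
  rw [this]
  exact isClosed_iInter fun i =>
    (isClosed_le (by fun_prop) (by fun_prop)).inter (isClosed_le (by fun_prop) (by fun_prop))

theorem aux_int (n : ℕ) (x y : Vec n) (hy0 : ∀ i, 0 < y i) (hyx : ∀ i, y i < x i) :
    ((x, y) : Pt n) ∈ interior (treatySet n) := by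
  refine mem_interior.2 ⟨⋂ i, ({p : Pt n | 0 < p.2 i} ∩ {p : Pt n | p.2 i < p.1 i}), ?_, ?_, ?_⟩
  · intro p hp i
    have := mem_iInter.1 hp i
    exact ⟨this.1.le, this.2.le⟩
  · exact isOpen_iInter_of_finite fun i =>
      (isOpen_lt (by fun_prop) (by fun_prop)).inter (isOpen_lt (by fun_prop) (by fun_prop))
  · exact mem_iInter.2 fun i => ⟨hy0 i, hyx i⟩

theorem aux_front (n : ℕ) (hn : 0 < n) (x y : Vec n) (hy0 : ∀ i, 0 < y i)
    (hyx : ∀ i, y i < x i) : (frontier (treatySet n)).Nonempty := by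
  obtain ⟨z, -, hz⟩ := aux_conn (isPreconnected_univ (α := Pt n)) (A := treatySet n)
    ⟨(x, y), mem_univ _, interior_subset (aux_int n x y hy0 hyx)⟩
    ⟨((0 : Vec n), fun _ => (1 : ℝ)), mem_univ _, fun h => by
      have := (h ⟨0, hn⟩).2
      simp at this
      linarith⟩
  exact ⟨z, hz⟩

/-- for `(x,y)` interior to `𝒜` (i.e. `0 < y < x` componentwise) and a
shift `t` with `−y < t < x − y`, setting
`δ = min( d((x,y), ∂𝒜), d((x,y), ∂𝒜 − (0,t)) )`, one has `δ > 0` and, for every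
`0 ≤ ε < δ`, the perturbed measure
`η_{x,y,t,ε}(A) = η*(A) − η*(A ∩ B_ε(x,y)) + η*((A − (0,t)) ∩ B_ε(x,y))`
is again a reinsurance treaty. -/
theorem stmt4 (n : ℕ) (hn : 0 < n) (μ : Measure (Vec n)) [IsProbabilityMeasure μ]
    (ηs : Measure (Pt n)) (hηs : IsTreaty n μ ηs)
    (x y t : Vec n) (hy0 : ∀ i, 0 < y i) (hyx : ∀ i, y i < x i)
    (ht1 : ∀ i, -y i < t i) (ht2 : ∀ i, t i < x i - y i) :
    0 < min (Metric.infDist ((x, y) : Pt n) (frontier (treatySet n)))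
        (Metric.infDist ((x, y) : Pt n)
          ((fun q : Pt n => q - (((0 : Vec n), t) : Pt n)) '' frontier (treatySet n))) ∧
    ∀ ε : ℝ, 0 ≤ ε →
      ε < min (Metric.infDist ((x, y) : Pt n) (frontier (treatySet n)))
        (Metric.infDist ((x, y) : Pt n)
          ((fun q : Pt n => q - (((0 : Vec n), t) : Pt n)) '' frontier (treatySet n))) →
      ∃ η' : Measure (Pt n), IsTreaty n μ η' ∧
        ∀ s : Set (Pt n), MeasurableSet s →
          η' s = ηs s - ηs (s ∩ Metric.ball ((x, y) : Pt n) ε)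
            + ηs ((fun q : Pt n => (q.1, q.2 + t)) ⁻¹' s ∩ Metric.ball ((x, y) : Pt n) ε) := by
  have hfr := aux_front n hn x y hy0 hyx
  have hint := aux_int n x y hy0 hyx
  have hint2 := aux_int n x (y + t) (fun i => by have := ht1 i; simp; linarith)
    (fun i => by have := ht2 i; simp; linarith)
  have himg : (fun q : Pt n => q - (((0 : Vec n), t) : Pt n)) '' frontier (treatySet n)
      = frontier ((fun q : Pt n => q - (((0 : Vec n), t) : Pt n)) '' treatySet n) :=
    (Homeomorph.subRight (((0 : Vec n), t) : Pt n)).image_frontier _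
  have hint3 : ((x, y) : Pt n) ∈
      interior ((fun q : Pt n => q - (((0 : Vec n), t) : Pt n)) '' treatySet n) := by
    have h : (fun q : Pt n => q - (((0 : Vec n), t) : Pt n)) '' interior (treatySet n)
      = interior ((fun q : Pt n => q - (((0 : Vec n), t) : Pt n)) '' treatySet n) :=
      (Homeomorph.subRight (((0 : Vec n), t) : Pt n)).image_interior _
    rw [← h]
    exact ⟨(x, y + t), hint2, by simp⟩
  obtain ⟨p1, b1⟩ := aux_ball _ _ hint hfr
  obtain ⟨p2, b2⟩ := aux_ball _ _ hint3 (himg ▸ hfr.image _)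
  rw [himg]
  refine ⟨lt_min p1 p2, fun ε _ hε => ?_⟩
  have hB1 := b1 ε (hε.trans_le (min_le_left _ _))
  have hB2 := b2 ε (hε.trans_le (min_le_right _ _))
  clear b1 b2 p1 p2 hε
  obtain ⟨hprob, hmap, hone⟩ := hηs
  have hBm : MeasurableSet (Metric.ball ((x, y) : Pt n) ε) := Metric.isOpen_ball.measurableSet
  generalize Metric.ball ((x, y) : Pt n) ε = B at hB1 hB2 hBm ⊢
  have hT : Measurable (fun q : Pt n => ((q.1, q.2 + t) : Pt n)) := by fun_prop
  have hA := (aux_closed n).measurableSet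
  have key : ∀ s : Set (Pt n), MeasurableSet s →
      (ηs.restrict Bᶜ + (ηs.restrict B).map (fun q : Pt n => ((q.1, q.2 + t) : Pt n))) s
        = ηs s - ηs (s ∩ B) + ηs ((fun q : Pt n => (q.1, q.2 + t)) ⁻¹' s ∩ B) := by
    intro s hs
    rw [Measure.add_apply, Measure.restrict_apply hs, Measure.map_apply hT hs,
      Measure.restrict_apply (hT hs), ← sdiff_eq, ← sdiff_inter_self_eq_sdiff, inter_comm B s,
      measure_sdiff inter_subset_left (hs.inter hBm).nullMeasurableSet (measure_ne_top _ _)]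
  refine ⟨_, ?_, key⟩
  have hm : (ηs.restrict Bᶜ + (ηs.restrict B).map
      (fun q : Pt n => ((q.1, q.2 + t) : Pt n))).map Prod.fst = μ := by
    rw [Measure.map_add _ _ measurable_fst, Measure.map_map measurable_fst hT]
    have : (Prod.fst ∘ fun q : Pt n => ((q.1, q.2 + t) : Pt n)) = Prod.fst := rfl
    rw [this, ← Measure.map_add _ _ measurable_fst, Measure.restrict_compl_add_restrict hBm, hmap]
  refine ⟨⟨?_⟩, hm, ?_⟩
  · have h := congrArg (fun m => m univ) hm
    simp only [Measure.map_apply measurable_fst MeasurableSet.univ, preimage_univ] at h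
    rw [h]; exact measure_univ
  · rw [key _ hA]
    have h1 : (fun q : Pt n => ((q.1, q.2 + t) : Pt n)) ⁻¹' treatySet n ∩ B = B := by
      refine inter_eq_right.2 fun q hq => ?_
      obtain ⟨r, hr, rfl⟩ := hB2 hq
      simpa using hr
    rw [h1, inter_eq_right.2 hB1, tsub_add_cancel_of_le (measure_mono hB1), hone]
end
end

section
/- In the setting of the integral-kernel support proposition, assume moreover that one can take 𝒞 = 𝒟 = 𝓜 (the derivatives exist as integral operators in every direction of 𝓜 − η*) and that the partial minimization function m(x) = inf_{y ∈ [0,x]} ( r*·p(x,y) + λ* · g(x,y) ) is measurable. Then η*( { (x,y) ∈ 𝒜 : y ∈ argmin_{t ∈ [0,x]} ( r*·p(x,t) + λ* · g(x,t) ) } ) = 1; i.e. the optimal treaty is concentrated on the pointwise minimizers of the Lagrangian kernel. -/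
open MeasureTheory Filter Topology Set

noncomputable section

/-- when the directional derivatives of `𝒫` and `𝒢` at the optimal
treaty `η*` are integral operators (with continuous kernels `p` and `g`) in
every direction of `𝓜 − η*`, and the partial minimization function
`m(x) = inf_{y ∈ [0,x]} ( r*·p(x,y) + λ*·g(x,y) )` is measurable, then `η*` is
concentrated on the set of pointwise minimizers of the Lagrangian kernel. -/
theorem stmt6 (n m : ℕ) (μ : Measure (Vec n)) [IsProbabilityMeasure μ]
    (hac : μ ≪ volume)
    (P : Measure (Pt n) → ℝ) (G : Measure (Pt n) → Fin m → ℝ)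
    (ηs : Measure (Pt n)) (hηs : IsTreaty n μ ηs) (hGs : ∀ i, G ηs i ≤ 0)
    (hopt : ∀ η, IsTreaty n μ η → (∀ i, G η i ≤ 0) → P ηs ≤ P η)
    (p : Pt n → ℝ) (g : Pt n → Fin m → ℝ)
    (hpcont : Continuous p) (hgcont : ∀ i, Continuous fun z => g z i)
    (hpint : ∀ η, IsTreaty n μ η → Integrable p η)
    (hgint : ∀ η, IsTreaty n μ η → ∀ i, Integrable (fun z => g z i) η)
    (hdP : ∀ η, IsTreaty n μ η →
      HasDirDeriv P ηs η (∫ z, p z ∂η - ∫ z, p z ∂ηs))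
    (hdG : ∀ η, IsTreaty n μ η → ∀ i, HasDirDeriv (fun ξ => G ξ i) ηs η
        (∫ z, g z i ∂η - ∫ z, g z i ∂ηs))
    (r : ℝ) (l : Fin m → ℝ) (hr : 0 ≤ r) (hl : ∀ i, 0 ≤ l i)
    (hcompl : ∑ i, l i * G ηs i = 0)
    (hineq : ∀ η, IsTreaty n μ η →
      0 ≤ r * (∫ z, p z ∂η - ∫ z, p z ∂ηs)
        + ∑ i, l i * (∫ z, g z i ∂η - ∫ z, g z i ∂ηs))
    (hm : Measurable fun x : Vec n =>
      sInf ((fun s => r * p (x, s) + ∑ i, l i * g (x, s) i) '' Icc 0 x)) :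
    ηs {q : Pt n | q ∈ treatySet n ∧ ∀ s ∈ Icc (0 : Vec n) q.1,
      r * p q + ∑ i, l i * g q i ≤ r * p (q.1, s) + ∑ i, l i * g (q.1, s) i} = 1 := by
  have hp := hηs.1
  have hA : MeasurableSet (treatySet n) := by
    have : treatySet n = ⋂ i, ({q : Pt n | 0 ≤ q.2 i} ∩ {q : Pt n | q.2 i ≤ q.1 i}) := by
      ext q; simp [treatySet]
    rw [this]
    refine MeasurableSet.iInter fun i => MeasurableSet.inter ?_ ?_
    · exact measurableSet_le (by fun_prop) (by fun_prop)
    · exact measurableSet_le (by fun_prop) (by fun_prop)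
  have hAae : ∀ᵐ q ∂ηs, q ∈ treatySet n := by
    rw [ae_iff]
    exact (prob_compl_eq_zero_iff hA).2 hηs.2.2
  set f : Pt n → ℝ := fun q => r * p q + ∑ i, l i * g q i with hf
  have hfc : Continuous f := by
    refine (continuous_const.mul hpcont).add ?_
    exact continuous_finsetSum _ fun i _ => continuous_const.mul (hgcont i)
  have hfi : ∀ η, IsTreaty n μ η → Integrable f η := fun η h =>
    ((hpint η h).const_mul r).add
      (integrable_finsetSum _ fun i _ => (hgint η h i).const_mul (l i))
  have hfe : ∀ η, IsTreaty n μ η →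
      ∫ z, f z ∂η = r * ∫ z, p z ∂η + ∑ i, l i * ∫ z, g z i ∂η := by
    intro η h
    have h1 : ∫ z, f z ∂η = ∫ z, r * p z ∂η + ∫ z, ∑ i, l i * g z i ∂η :=
      integral_add ((hpint η h).const_mul r)
        (integrable_finsetSum _ fun i _ => (hgint η h i).const_mul (l i))
    rw [h1, integral_const_mul,
      integral_finsetSum _ fun i _ => (hgint η h i).const_mul (l i)]
    simp only [integral_const_mul]
  have hle : ∀ η, IsTreaty n μ η → ∫ z, f z ∂ηs ≤ ∫ z, f z ∂η := by
    intro η h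
    have h1 := hineq η h
    rw [hfe η h, hfe ηs hηs]
    simp only [mul_sub, Finset.sum_sub_distrib] at h1
    linarith
  have key : ∀ s : Icc (0 : Vec n) 1, ∀ᵐ q ∂ηs, f q ≤ f (q.1, s.1 * q.1) := by
    intro s
    classical
    have hTm : Measurable fun q : Pt n => (q.1, s.1 * q.1) := by fun_prop
    let φ : Pt n → Pt n := fun q =>
      if f (q.1, s.1 * q.1) < f q then (q.1, s.1 * q.1) else q
    have hφ : Measurable φ :=
      Measurable.ite (measurableSet_lt (hfc.measurable.comp hTm) hfc.measurable) hTm measurable_id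
    have hφ1 : ∀ q, (φ q).1 = q.1 := by
      intro q; simp only [φ]; split_ifs <;> rfl
    have hφA : ∀ q ∈ treatySet n, φ q ∈ treatySet n := by
      intro q hq
      simp only [φ]
      split_ifs
      · intro i
        have h0 : 0 ≤ s.1 i := s.2.1 i
        have h1 : s.1 i ≤ 1 := s.2.2 i
        have hx : 0 ≤ q.1 i := (hq i).1.trans (hq i).2
        exact ⟨mul_nonneg h0 hx, mul_le_of_le_one_left hx h1⟩
      · exact hq
    have hφf : ∀ q, f (φ q) ≤ f q := by
      intro q; simp only [φ]; split_ifs with h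
      · exact h.le
      · exact le_rfl
    have hT : IsTreaty n μ (ηs.map φ) := by
      refine ⟨Measure.isProbabilityMeasure_map hφ.aemeasurable, ?_, ?_⟩
      · rw [Measure.map_map measurable_fst hφ]
        have : (Prod.fst ∘ φ) = Prod.fst := funext hφ1
        rw [this]; exact hηs.2.1
      · rw [Measure.map_apply hφ hA]
        refine le_antisymm prob_le_one ?_
        rw [← hηs.2.2]
        exact measure_mono hφA
    have hi1 := hfi _ hηs
    have hi2 : Integrable (fun q => f (φ q)) ηs :=
      (integrable_map_measure hfc.aestronglyMeasurable hφ.aemeasurable).1 (hfi _ hT)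
    have h1 := hle _ hT
    rw [integral_map hφ.aemeasurable hfc.aestronglyMeasurable] at h1
    have h2 : ∫ q, f (φ q) ∂ηs = ∫ q, f q ∂ηs :=
      le_antisymm (integral_mono hi2 hi1 hφf) h1
    have h3 := (integral_eq_iff_of_ae_le hi2 hi1 (ae_of_all _ hφf)).1 h2
    filter_upwards [h3] with q hq
    by_contra hlt
    push Not at hlt
    simp only [φ, if_pos hlt] at hq
    exact hlt.ne hq
  have : Nonempty (Icc (0 : Vec n) 1) := ⟨⟨0, le_rfl, zero_le_one⟩⟩
  have hall : ∀ᵐ q ∂ηs, ∀ k : ℕ,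
      f q ≤ f (q.1, (TopologicalSpace.denseSeq (Icc (0 : Vec n) 1) k).1 * q.1) :=
    ae_all_iff.2 fun k => key _
  refine (measure_congr (eventuallyEq_univ.2 ?_)).trans (measure_univ (μ := ηs))
  filter_upwards [hAae, hall] with q hq hk
  refine ⟨hq, fun t ht => ?_⟩
  have hcl : IsClosed {s : Icc (0 : Vec n) 1 | f q ≤ f (q.1, s.1 * q.1)} :=
    isClosed_le continuous_const (hfc.comp (by fun_prop))
  have huniv : ∀ s : Icc (0 : Vec n) 1, f q ≤ f (q.1, s.1 * q.1) := fun s =>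
    hcl.closure_subset_iff.2 (range_subset_iff.2 hk)
      (TopologicalSpace.denseRange_denseSeq (Icc (0 : Vec n) 1) s)
  have hx : ∀ i, 0 ≤ q.1 i := fun i => (hq i).1.trans (hq i).2
  have hs := huniv ⟨fun i => t i / q.1 i, fun i => div_nonneg (ht.1 i) (hx i),
    fun i => div_le_one_of_le₀ (ht.2 i) (hx i)⟩
  have he : (fun i => t i / q.1 i) * q.1 = t := by
    funext i
    simp only [Pi.mul_apply]
    by_cases h0 : q.1 i = 0
    · have h1 : 0 ≤ t i := ht.1 i
      have h2 : t i ≤ q.1 i := ht.2 i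
      rw [h0] at h2 ⊢
      simp; linarith
    · exact div_mul_cancel₀ _ h0
  simp only [he] at hs
  exact hs
end
end

section
/- Let p : ℝ₊ⁿ × ℝ₊ⁿ → ℝ be continuous and integrable with respect to every η ∈ 𝓜, let 𝒫(η) = ∫ p(x,y) η(dx,dy), and define M = {(x,y) ∈ 𝒜 : y ∈ argmin_{t ∈ [0,x]} p(x,t)}. Then, assuming the partial minimization function x ↦ inf_{t∈[0,x]} p(x,t) is measurable, a treaty η ∈ 𝓜 minimizes 𝒫 over 𝓜 if and only if η(M) = 1. -/
open MeasureTheory Filter Topology Set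

noncomputable section

lemma aux_exists_min (n : ℕ) (p : Pt n → ℝ) (hp : Continuous p) (x : Vec n) (hx : 0 ≤ x) :
    ∃ s ∈ Icc (0 : Vec n) x, p (x, s) = sInf ((fun s => p (x, s)) '' Icc 0 x) ∧
      ∀ t ∈ Icc (0 : Vec n) x, p (x, s) ≤ p (x, t) := by
  have hc : ContinuousOn (fun s => p (x, s)) (Icc 0 x) := by fun_prop
  obtain ⟨s, hs, he⟩ := (isCompact_Icc (a := (0 : Vec n)) (b := x)).exists_sInf_image_eq
    ⟨0, ⟨le_refl _, hx⟩⟩ hc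
  refine ⟨s, hs, he.symm, fun t ht => ?_⟩
  have := csInf_le (isCompact_Icc.bddBelow_image hc) (mem_image_of_mem _ ht)
  rw [he] at this
  exact this

lemma aux_sel (n : ℕ) (p : Pt n → ℝ) (hp : Continuous p)
    (hm : Measurable fun x : Vec n => sInf ((fun s => p (x, s)) '' Icc 0 x))
    (ε : ℝ) (hε : 0 < ε) :
    ∃ f : Vec n → Vec n, Measurable f ∧ ∀ x, 0 ≤ x → f x ∈ Icc 0 x ∧
      p (x, f x) < sInf ((fun s => p (x, s)) '' Icc 0 x) + ε := by
  classical
  have : Nonempty (Icc (0 : Vec n) 1) := ⟨⟨0, le_refl _, zero_le_one⟩⟩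
  let u : ℕ → Vec n := fun k => (TopologicalSpace.denseSeq (Icc (0 : Vec n) 1) k : Vec n)
  have hu : ∀ k, u k ∈ Icc (0 : Vec n) 1 := fun k =>
    (TopologicalSpace.denseSeq (Icc (0 : Vec n) 1) k).2
  let P : ℕ → Vec n → Prop := fun k x =>
    ¬ (0 ≤ x) ∨ p (x, u k * x) < sInf ((fun s => p (x, s)) '' Icc 0 x) + ε
  have hP : ∀ x, ∃ k, P k x := by
    intro x
    by_cases hx : 0 ≤ x
    swap
    · exact ⟨0, Or.inl hx⟩
    obtain ⟨s, hs, he, -⟩ := aux_exists_min n p hp x hx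
    let O : Set (Icc (0 : Vec n) 1) :=
      {v | p (x, (v : Vec n) * x) < sInf ((fun s => p (x, s)) '' Icc 0 x) + ε}
    have hO : IsOpen O := isOpen_lt (by fun_prop) continuous_const
    have hne : O.Nonempty := by
      refine ⟨⟨fun i => s i / x i, fun i => div_nonneg (hs.1 i) (hx i),
        fun i => div_le_one_of_le₀ (hs.2 i) (hx i)⟩, ?_⟩
      have h1 : (fun i => s i / x i) * x = s := by
        funext i
        have h2 := hs.1 i
        have h3 := hs.2 i
        by_cases h0 : x i = 0
        · simp only [Pi.zero_apply] at h2
          simp only [Pi.mul_apply, h0, mul_zero]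
          linarith
        · simp only [Pi.mul_apply]
          field_simp
      change p (x, (fun i => s i / x i) * x) < _
      rw [h1, he]
      linarith
    obtain ⟨k, hk⟩ := (TopologicalSpace.denseRange_denseSeq (Icc (0 : Vec n) 1)).exists_mem_open
      hO hne
    exact ⟨k, Or.inr hk⟩
  refine ⟨fun x => u (Nat.find (hP x)) * x, ?_, ?_⟩
  · refine Measurable.find (f := fun k x => u k * x) (p := P) (fun k => ?_) (fun k => ?_) hP
    · exact (continuous_const.mul continuous_id).measurable
    · refine MeasurableSet.union ?_ ?_
      · exact (isClosed_le continuous_const continuous_id).measurableSet.compl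
      · refine measurableSet_lt ?_ (hm.add_const ε)
        exact (hp.comp (continuous_id.prodMk (continuous_const.mul continuous_id))).measurable
  · intro x hx
    have hk := hu (Nat.find (hP x))
    refine ⟨⟨fun i => mul_nonneg (hk.1 i) (hx i), fun i => ?_⟩, ?_⟩
    · exact mul_le_of_le_one_left (hx i) (hk.2 i)
    · exact (Nat.find_spec (hP x)).resolve_left (not_not.2 hx)

lemma aux_meas (n : ℕ) : MeasurableSet (treatySet n) := by
  have : IsClosed (treatySet n) := by
    have : treatySet n = ⋂ i, {p : Pt n | 0 ≤ p.2 i ∧ p.2 i ≤ p.1 i} := by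
      ext; simp [treatySet]
    rw [this]
    refine isClosed_iInter fun i => ?_
    have h1 : IsClosed {p : Pt n | 0 ≤ p.2 i} := isClosed_le (by fun_prop) (by fun_prop)
    have h2 : IsClosed {p : Pt n | p.2 i ≤ p.1 i} := isClosed_le (by fun_prop) (by fun_prop)
    exact h1.inter h2
  exact this.measurableSet

lemma aux_ae (n : ℕ) (μ : Measure (Vec n)) (η : Measure (Pt n)) (h : IsTreaty n μ η) :
    ∀ᵐ z ∂η, z ∈ treatySet n := by
  have := h.1
  exact (mem_ae_iff_prob_eq_one (aux_meas n)).2 h.2.2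

lemma aux_treaty (n : ℕ) (μ : Measure (Vec n)) [IsProbabilityMeasure μ]
    (hpos : ∀ᵐ x ∂μ, 0 ≤ x) (f : Vec n → Vec n) (hf : Measurable f)
    (hfx : ∀ x, 0 ≤ x → f x ∈ Icc 0 x) :
    IsTreaty n μ (μ.map (fun x => (x, f x))) := by
  have hg : Measurable (fun x => (x, f x)) := measurable_id.prodMk hf
  have : IsProbabilityMeasure (μ.map (fun x => (x, f x))) :=
    Measure.isProbabilityMeasure_map hg.aemeasurable
  refine ⟨this, ?_, ?_⟩
  · rw [Measure.map_map measurable_fst hg]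
    exact Measure.map_id
  · refine (mem_ae_iff_prob_eq_one (aux_meas n)).1 ?_
    refine (ae_map_iff hg.aemeasurable (aux_meas n)).2 ?_
    filter_upwards [hpos] with x hx i
    exact ⟨(hfx x hx).1 i, (hfx x hx).2 i⟩

/-- for `𝒫(η) = ∫ p dη` (no constraints), a treaty `η ∈ 𝓜` is
optimal iff it is concentrated on
`M = {(x,y) ∈ 𝒜 : y ∈ argmin_{t ∈ [0,x]} p(x,t)}`, assuming the partial
minimization function `x ↦ inf_{t ∈ [0,x]} p(x,t)` is measurable. -/
theorem stmt7 (n : ℕ) (μ : Measure (Vec n)) [IsProbabilityMeasure μ]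
    (hac : μ ≪ volume)
    (p : Pt n → ℝ) (hpcont : Continuous p)
    (hpint : ∀ η, IsTreaty n μ η → Integrable p η)
    (hm : Measurable fun x : Vec n => sInf ((fun s => p (x, s)) '' Icc 0 x))
    (η : Measure (Pt n)) (hη : IsTreaty n μ η) :
    (∀ ϑ, IsTreaty n μ ϑ → ∫ z, p z ∂η ≤ ∫ z, p z ∂ϑ) ↔
      η {q : Pt n | q ∈ treatySet n ∧
        ∀ s ∈ Icc (0 : Vec n) q.1, p q ≤ p (q.1, s)} = 1 := by
  have := hη.1
  have hsel := aux_sel n p hpcont hm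
  have hmin := aux_exists_min n p hpcont
  set m : Vec n → ℝ := fun x => sInf ((fun s => p (x, s)) '' Icc 0 x) with hmdef
  have hbox : ∀ q ∈ treatySet n, 0 ≤ q.1 ∧ q.2 ∈ Icc (0 : Vec n) q.1 := fun q hq =>
    ⟨fun i => (hq i).1.trans (hq i).2, fun i => (hq i).1, fun i => (hq i).2⟩
  have hlow : ∀ x, 0 ≤ x → ∀ t ∈ Icc (0 : Vec n) x, m x ≤ p (x, t) := by
    intro x hx t ht
    obtain ⟨s, hs, he, h⟩ := hmin x hx
    exact he.symm.le.trans (h t ht)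
  have hpos : ∀ᵐ x ∂μ, 0 ≤ x := by
    rw [← hη.2.1]
    refine (ae_map_iff measurable_fst.aemeasurable
      (isClosed_le continuous_const continuous_id).measurableSet).2 ?_
    filter_upwards [aux_ae n μ η hη] with q hq using (hbox q hq).1
  have hMeq : {q : Pt n | q ∈ treatySet n ∧
        ∀ s ∈ Icc (0 : Vec n) q.1, p q ≤ p (q.1, s)} = treatySet n ∩ {q | p q = m q.1} := by
    ext q
    constructor
    · rintro ⟨hq, h⟩
      obtain ⟨s, hs, he, -⟩ := hmin q.1 (hbox q hq).1
      exact ⟨hq, le_antisymm ((h s hs).trans he.le) (hlow q.1 (hbox q hq).1 q.2 (hbox q hq).2)⟩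
    · rintro ⟨hq, h⟩
      refine ⟨hq, fun s hs => ?_⟩
      have h' : p q = m q.1 := h
      rw [h']
      exact hlow q.1 (hbox q hq).1 s hs
  have hMm : MeasurableSet (treatySet n ∩ {q : Pt n | p q = m q.1}) :=
    (aux_meas n).inter (measurableSet_eq_fun hpcont.measurable (hm.comp measurable_fst))
  rw [hMeq, ← mem_ae_iff_prob_eq_one hMm]
  -- integrals of selections
  have hselint : ∀ f : Vec n → Vec n, Measurable f → (∀ x, 0 ≤ x → f x ∈ Icc 0 x) →
      Integrable (fun x => p (x, f x)) μ ∧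
      ∫ z, p z ∂(μ.map (fun x => (x, f x))) = ∫ x, p (x, f x) ∂μ := by
    intro f hf hfx
    have hg : Measurable (fun x => (x, f x)) := measurable_id.prodMk hf
    have h1 := hpint _ (aux_treaty n μ hpos f hf hfx)
    exact ⟨(integrable_map_measure hpcont.aestronglyMeasurable hg.aemeasurable).1 h1,
      integral_map hg.aemeasurable hpcont.aestronglyMeasurable⟩
  have hmint : Integrable m μ := by
    obtain ⟨f, hf, hfx⟩ := hsel 1 one_pos
    have h1 := (hselint f hf (fun x hx => (hfx x hx).1)).1
    have h2 := h1.sub (integrable_const (1 : ℝ))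
    refine integrable_of_le_of_le hm.aestronglyMeasurable ?_ ?_ h2 h1
    · filter_upwards [hpos] with x hx
      have := (hfx x hx).2
      simp only [Pi.sub_apply]
      linarith
    · filter_upwards [hpos] with x hx using hlow x hx _ (hfx x hx).1
  have hmfst : ∀ ϑ, IsTreaty n μ ϑ → Integrable (fun z : Pt n => m z.1) ϑ ∧
      ∫ z, m z.1 ∂ϑ = ∫ x, m x ∂μ := by
    intro ϑ hϑ
    have h := hϑ.2.1
    rw [← h] at hmint ⊢
    exact ⟨(integrable_map_measure hm.aestronglyMeasurable measurable_fst.aemeasurable).1 hmint,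
      (integral_map measurable_fst.aemeasurable hm.aestronglyMeasurable).symm⟩
  have hge : ∀ ϑ, IsTreaty n μ ϑ → ∀ᵐ z ∂ϑ, m z.1 ≤ p z := by
    intro ϑ hϑ
    filter_upwards [aux_ae n μ ϑ hϑ] with q hq
    exact hlow q.1 (hbox q hq).1 q.2 (hbox q hq).2
  constructor
  · intro hopt
    have hle : ∫ z, p z ∂η ≤ ∫ x, m x ∂μ := by
      refine le_of_forall_pos_le_add fun ε hε => ?_
      obtain ⟨f, hf, hfx⟩ := hsel ε hε
      obtain ⟨h1, h2⟩ := hselint f hf (fun x hx => (hfx x hx).1)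
      have h3 := hopt _ (aux_treaty n μ hpos f hf (fun x hx => (hfx x hx).1))
      rw [h2] at h3
      have h4 : ∫ x, p (x, f x) ∂μ ≤ ∫ x, (m x + ε) ∂μ := by
        refine integral_mono_ae h1 (hmint.add (integrable_const ε)) ?_
        filter_upwards [hpos] with x hx using (hfx x hx).2.le
      rw [integral_add hmint (integrable_const ε)] at h4
      simp at h4
      linarith
    obtain ⟨h5, h6⟩ := hmfst η hη
    have h7 : ∫ z, m z.1 ∂η = ∫ z, p z ∂η :=
      le_antisymm (integral_mono_ae h5 (hpint η hη) (hge η hη)) (by rw [h6]; exact hle)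
    have h8 := (integral_eq_iff_of_ae_le h5 (hpint η hη) (hge η hη)).1 h7
    filter_upwards [aux_ae n μ η hη, h8] with z hz h using ⟨hz, h.symm⟩
  · intro hM ϑ hϑ
    have h1 : ∫ z, p z ∂η = ∫ z, m z.1 ∂η := by
      refine integral_congr_ae ?_
      filter_upwards [hM] with z hz using hz.2
    rw [h1, (hmfst η hη).2, ← (hmfst ϑ hϑ).2]
    exact integral_mono_ae (hmfst ϑ hϑ).1 (hpint ϑ hϑ) (hge ϑ hϑ)
end
end

section
/- Let μ and ν be probability measures on [0,∞) with cumulative distribution functions F_μ and F_ν. There exists a coupling η of μ and ν (a probability measure on ℝ₊ × ℝ₊ with first marginal μ and second marginal ν) satisfying η({(x,y) : 0 ≤ y ≤ x}) = 1 if and only if ν is first-order stochastically dominated by μ, i.e. F_ν(x) ≥ F_μ(x) for every x ∈ ℝ. -/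
open MeasureTheory Filter Topology Set

noncomputable section

open ProbabilityTheory in
lemma quant_gal (μ : Measure ℝ) (u : ℝ) (hu : u ∈ Ioo (0:ℝ) 1) (x : ℝ) :
    sInf {x | u ≤ cdf μ x} ≤ x ↔ u ≤ cdf μ x := by
  have hne : {x | u ≤ cdf μ x}.Nonempty := by
    obtain ⟨y, hy⟩ := ((tendsto_cdf_atTop μ).eventually (lt_mem_nhds hu.2)).exists
    exact ⟨y, hy.le⟩
  have hbd : BddBelow {x | u ≤ cdf μ x} := by
    obtain ⟨y, hy⟩ := ((tendsto_cdf_atBot μ).eventually (gt_mem_nhds hu.1)).exists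
    refine ⟨y, fun z hz => ?_⟩
    by_contra! h
    exact absurd (monotone_cdf μ h.le) (not_le.2 (lt_of_lt_of_le hy hz))
  refine ⟨fun h => ?_, fun h => csInf_le hbd h⟩
  refine le_trans ?_ (monotone_cdf μ h)
  have hc : Tendsto (cdf μ) (𝓝[>] (sInf {x | u ≤ cdf μ x})) (𝓝 (cdf μ (sInf {x | u ≤ cdf μ x}))) :=
    ((cdf μ).right_continuous _).tendsto.mono_left (nhdsWithin_mono _ Ioi_subset_Ici_self)
  refine ge_of_tendsto hc ?_
  filter_upwards [self_mem_nhdsWithin] with y hy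
  obtain ⟨z, hz, hzy⟩ := exists_lt_of_csInf_lt hne hy
  exact le_trans hz (monotone_cdf μ hzy.le)

open ProbabilityTheory in
lemma quant_aem (μ : Measure ℝ) :
    AEMeasurable (fun u => sInf {x | u ≤ cdf μ x}) (volume.restrict (Ioo (0:ℝ) 1)) := by
  refine aemeasurable_restrict_of_monotoneOn measurableSet_Ioo ?_
  intro u hu v hv huv
  show sInf _ ≤ sInf _
  rw [quant_gal μ u hu]
  exact huv.trans ((quant_gal μ v hv _).1 le_rfl)

instance quant_prob : IsProbabilityMeasure (volume.restrict (Ioo (0:ℝ) 1)) :=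
  ⟨by simp⟩

open ProbabilityTheory in
lemma quant_map (μ : Measure ℝ) [IsProbabilityMeasure μ] :
    (volume.restrict (Ioo (0:ℝ) 1)).map (fun u => sInf {x | u ≤ cdf μ x}) = μ := by
  have := Measure.isProbabilityMeasure_map (quant_aem μ)
  refine Measure.ext_of_Iic _ _ fun x => ?_
  rw [Measure.map_apply_of_aemeasurable (quant_aem μ) measurableSet_Iic, ← ofReal_cdf μ x,
    Measure.restrict_apply' measurableSet_Ioo]
  have h0 := cdf_nonneg μ x
  have h1 := cdf_le_one μ x
  have : (fun u => sInf {x | u ≤ cdf μ x}) ⁻¹' Iic x ∩ Ioo 0 1 = Iic (cdf μ x) ∩ Ioo 0 1 := by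
    ext u
    simp only [mem_inter_iff, mem_preimage, mem_Iic]
    exact and_congr_left fun hu => quant_gal μ u hu x
  rw [this]
  apply le_antisymm
  · refine (measure_mono (t := Ioc 0 (cdf μ x)) ?_).trans (by simp)
    rintro u ⟨a, b⟩
    exact ⟨b.1, a⟩
  · refine le_trans (by simp) (measure_mono (s := Ioo 0 (cdf μ x)) ?_)
    rintro u ⟨a, b⟩
    exact ⟨b.le, a, b.trans_le h1⟩

/-- for probability measures `μ, ν` on `[0,∞)`, a coupling of `μ`
and `ν` concentrated on `{(x,y) : 0 ≤ y ≤ x}` exists if and only if `ν` is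
first-order stochastically dominated by `μ`, i.e. `F_ν(x) ≥ F_μ(x)` for all
`x ∈ ℝ`. -/
theorem stmt9 (μ ν : Measure ℝ) [IsProbabilityMeasure μ] [IsProbabilityMeasure ν]
    (hμ : μ (Ici 0) = 1) (hν : ν (Ici 0) = 1) :
    (∃ η : Measure (ℝ × ℝ), IsProbabilityMeasure η ∧
        η.map Prod.fst = μ ∧ η.map Prod.snd = ν ∧
        η {q : ℝ × ℝ | 0 ≤ q.2 ∧ q.2 ≤ q.1} = 1) ↔
      ∀ x : ℝ, μ (Iic x) ≤ ν (Iic x) := by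
  constructor
  · rintro ⟨η, hη, h1, h2, h3⟩ x
    have hm : MeasurableSet {q : ℝ × ℝ | 0 ≤ q.2 ∧ q.2 ≤ q.1} :=
      (measurableSet_le measurable_const measurable_snd).inter
        (measurableSet_le measurable_snd measurable_fst)
    have hae : ∀ᵐ q ∂η, q ∈ {q : ℝ × ℝ | 0 ≤ q.2 ∧ q.2 ≤ q.1} :=
      (mem_ae_iff_prob_eq_one hm).2 h3
    rw [← h1, ← h2, Measure.map_apply measurable_fst measurableSet_Iic,
      Measure.map_apply measurable_snd measurableSet_Iic]
    refine measure_mono_ae ?_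
    filter_upwards [hae] with q hq hx
    exact le_trans hq.2 hx
  · intro h
    have hp := (quant_aem μ).prodMk (quant_aem ν)
    have hP := Measure.isProbabilityMeasure_map hp
    have hm : MeasurableSet {q : ℝ × ℝ | 0 ≤ q.2 ∧ q.2 ≤ q.1} :=
      (measurableSet_le measurable_const measurable_snd).inter
        (measurableSet_le measurable_snd measurable_fst)
    refine ⟨_, hP, ?_, ?_, ?_⟩
    · rw [AEMeasurable.map_map_of_aemeasurable measurable_fst.aemeasurable hp]
      exact quant_map μ
    · rw [AEMeasurable.map_map_of_aemeasurable measurable_snd.aemeasurable hp]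
      exact quant_map ν
    · refine (mem_ae_iff_prob_eq_one hm).1 ?_
      refine (ae_map_iff hp hm).2 ?_
      have hpos : ∀ᵐ u ∂(volume.restrict (Ioo (0:ℝ) 1)),
          sInf {x | u ≤ ProbabilityTheory.cdf ν x} ∈ Ici (0:ℝ) := by
        refine (ae_map_iff (quant_aem ν) measurableSet_Ici).1 ?_
        rw [quant_map ν]
        exact (mem_ae_iff_prob_eq_one measurableSet_Ici).2 hν
      filter_upwards [hpos, ae_restrict_mem measurableSet_Ioo] with u h0 hu
      refine ⟨h0, ?_⟩
      refine (quant_gal ν u hu _).2 (((quant_gal μ u hu _).1 le_rfl).trans ?_)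
      rw [ProbabilityTheory.cdf_eq_real, ProbabilityTheory.cdf_eq_real]
      exact ENNReal.toReal_mono (measure_ne_top _ _) (h _)
end
end

section
/- Let μ be a probability measure on [0,∞) with finite second moment and mean m̄ = ∫ x μ(dx), let 0 ≤ c ≤ m̄, and let a* ≥ 0 satisfy ∫ (x − a*)₊ μ(dx) = c. Then for every reinsurance treaty η ∈ 𝓜 (for μ, with n = 1) whose reinsured mean satisfies ∫ y η(dx,dy) = c, the variance of the retained-loss distribution T_#η is at least the variance of the distribution of min(X, a*) under μ: Var(T_#η) ≥ Var((x ↦ min(x, a*))_#μ). Equivalently, among all (possibly randomized) treaties with expected reinsured amount c, the stop-loss treaty (Id, x ↦ (x − a*)₊)_#μ minimizes the retained variance. -/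
open MeasureTheory Filter Topology Set

noncomputable section

/-- The variance `∫ t² dξ − (∫ t dξ)²` of a distribution `ξ` on ℝ. -/
def mvar (ξ : Measure ℝ) : ℝ := (∫ t, t ^ 2 ∂ξ) - (∫ t, t ∂ξ) ^ 2

/-- among all (possibly randomized) reinsurance treaties whose
expected reinsured amount equals `c`, the stop-loss treaty with retention `a*`
(where `∫ (x − a*)₊ dμ = c`) minimizes the retained variance: for every treaty
`η` with `∫ y dη = c`, `Var(T_#η) ≥ Var((min(·,a*))_#μ)`. -/
theorem stmt13 (μ : Measure ℝ) [IsProbabilityMeasure μ]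
    (hμ : μ (Ici 0) = 1)
    (hmom : Integrable (fun x : ℝ => x ^ 2) μ)
    (c : ℝ) (hc0 : 0 ≤ c) (hcm : c ≤ ∫ x, x ∂μ)
    (a : ℝ) (ha0 : 0 ≤ a) (ha : ∫ x, max (x - a) 0 ∂μ = c)
    (η : Measure (ℝ × ℝ)) (hηp : IsProbabilityMeasure η)
    (hη1 : η.map Prod.fst = μ)
    (hη2 : η {q : ℝ × ℝ | 0 ≤ q.2 ∧ q.2 ≤ q.1} = 1)
    (hmean : ∫ q : ℝ × ℝ, q.2 ∂η = c) :
    mvar (μ.map fun x => min x a) ≤ mvar (η.map fun q : ℝ × ℝ => q.1 - q.2) := by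
  subst hη1
  have hS : MeasurableSet {q : ℝ × ℝ | 0 ≤ q.2 ∧ q.2 ≤ q.1} :=
    (measurableSet_le measurable_const measurable_snd).inter
      (measurableSet_le measurable_snd measurable_fst)
  have hae : ∀ᵐ q ∂η, 0 ≤ q.2 ∧ q.2 ≤ q.1 :=
    (mem_ae_iff_prob_eq_one hS).2 hη2
  have hx2 : Integrable (fun q : ℝ × ℝ => q.1 ^ 2) η :=
    (integrable_map_measure (f := Prod.fst) (by fun_prop) (by fun_prop)).1 hmom
  have hx : Integrable (fun q : ℝ × ℝ => q.1) η := by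
    refine (hx2.add (integrable_const (1:ℝ))).mono' (by fun_prop) (ae_of_all _ fun q => ?_)
    simp only [Pi.add_apply, Real.norm_eq_abs]
    rw [abs_le]
    constructor <;> nlinarith [sq_nonneg (q.1 - 1), sq_nonneg (q.1 + 1)]
  have hy : Integrable (fun q : ℝ × ℝ => q.2) η := by
    refine hx.mono' (by fun_prop) ?_
    filter_upwards [hae] with q hq
    rw [Real.norm_eq_abs, abs_of_nonneg hq.1]
    exact hq.2
  have hR : Integrable (fun q : ℝ × ℝ => q.1 - q.2) η := hx.sub hy
  have hR2 : Integrable (fun q : ℝ × ℝ => (q.1 - q.2) ^ 2) η := by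
    refine hx2.mono' (by fun_prop) ?_
    filter_upwards [hae] with q hq
    rw [Real.norm_eq_abs, abs_of_nonneg (sq_nonneg _)]
    nlinarith [hq.1, hq.2]
  have hM : Integrable (fun q : ℝ × ℝ => min q.1 a) η := hx.inf (integrable_const a)
  have hM2 : Integrable (fun q : ℝ × ℝ => (min q.1 a) ^ 2) η := by
    refine hx2.mono' (by fun_prop) ?_
    filter_upwards [hae] with q hq
    rw [Real.norm_eq_abs, abs_of_nonneg (sq_nonneg _)]
    have h1 : min q.1 a ≤ q.1 := min_le_left _ _
    have h2 : 0 ≤ min q.1 a := le_min (hq.1.trans hq.2) ha0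
    nlinarith
  rw [integral_map (by fun_prop) (by fun_prop)] at ha
  have hEM : ∫ q : ℝ × ℝ, min q.1 a ∂η = ∫ q : ℝ × ℝ, (q.1 - q.2) ∂η := by
    have hmx : Integrable (fun q : ℝ × ℝ => max (q.1 - a) 0) η :=
      (hx.sub (integrable_const a)).sup (integrable_const 0)
    have e : (fun q : ℝ × ℝ => min q.1 a) = fun q => q.1 - max (q.1 - a) 0 := by
      funext q
      rcases le_total q.1 a with h | h
      · rw [min_eq_left h, max_eq_right (by linarith)]; ring
      · rw [min_eq_right h, max_eq_left (by linarith)]; ring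
    rw [e, integral_sub hx hmx, integral_sub hx hy, ha, hmean]
  have key : ∫ q : ℝ × ℝ, ((min q.1 a) ^ 2 - 2 * a * min q.1 a) ∂η
      ≤ ∫ q : ℝ × ℝ, ((q.1 - q.2) ^ 2 - 2 * a * (q.1 - q.2)) ∂η := by
    refine integral_mono_ae (hM2.sub (hM.const_mul _)) (hR2.sub (hR.const_mul _)) ?_
    filter_upwards [hae] with q hq
    rcases le_total q.1 a with h | h
    · simp only [min_eq_left h]
      nlinarith [hq.1, hq.2, mul_nonneg hq.1 (sub_nonneg.2 h)]
    · simp only [min_eq_right h]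
      nlinarith [sq_nonneg (q.1 - q.2 - a)]
  rw [integral_sub hM2 (hM.const_mul _), integral_sub hR2 (hR.const_mul _),
    integral_const_mul, integral_const_mul, hEM] at key
  unfold mvar
  rw [Measure.map_map (by fun_prop) (by fun_prop)]
  rw [integral_map (by fun_prop) (by fun_prop), integral_map (by fun_prop) (by fun_prop),
    integral_map (by fun_prop) (by fun_prop), integral_map (by fun_prop) (by fun_prop)]
  simp only [Function.comp_apply]
  rw [hEM]
  linarith
end
end

section
/- Let μ be a probability measure on [0,∞) with finite second moment and variance V = Var(μ) > 0, and let 0 ≤ c ≤ V. Then for every reinsurance treaty η ∈ 𝓜 (for μ, with n = 1) whose reinsured amount has variance c, i.e. Var(π₂#η) = c, the retained variance satisfies Var(T_#η) ≥ (√V − √c)². Moreover equality holds for the quota-share treaty η = (Id, x ↦ a·x)_#μ with a = √(c/V); hence the quota-share contract R(x) = a·x minimizes the retained variance among all (possibly randomized) treaties with reinsured variance c. -/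
open MeasureTheory Filter Topology Set

noncomputable section

theorem sq_int_le {α : Type*} [MeasurableSpace α] (η : Measure α) [IsProbabilityMeasure η]
    (X Y : α → ℝ) (hX : MemLp X 2 η) (hY : MemLp Y 2 η) (k : ℝ) :
    0 ≤ (∫ q, Y q ^ 2 ∂η) - (∫ q, Y q ∂η) ^ 2
      - 2 * k * ((∫ q, X q * Y q ∂η) - (∫ q, X q ∂η) * (∫ q, Y q ∂η))
      + k ^ 2 * ((∫ q, X q ^ 2 ∂η) - (∫ q, X q ∂η) ^ 2) := by
  have iX := hX.integrable (by norm_num)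
  have iY := hY.integrable (by norm_num)
  have iX2 := hX.integrable_sq
  have iY2 := hY.integrable_sq
  have iXY : Integrable (fun q => X q * Y q) η := hX.integrable_mul hY
  set m := ∫ q, X q ∂η
  set n := ∫ q, Y q ∂η
  have h0 : 0 ≤ ∫ q, (Y q - k * X q - (n - k * m)) ^ 2 ∂η :=
    integral_nonneg fun q => sq_nonneg _
  have e : (fun q => (Y q - k * X q - (n - k * m)) ^ 2) = fun q =>
      Y q ^ 2 + (-2 * k) * (X q * Y q) + k ^ 2 * X q ^ 2 + (-2 * (n - k * m)) * Y q
        + (2 * (n - k * m) * k) * X q + (n - k * m) ^ 2 := by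
    funext q; ring
  rw [e, integral_add (by fun_prop) (by fun_prop), integral_add (by fun_prop) (by fun_prop),
    integral_add (by fun_prop) (by fun_prop), integral_add (by fun_prop) (by fun_prop),
    integral_add (by fun_prop) (by fun_prop)] at h0
  simp only [integral_const_mul, integral_const, probReal_univ, one_smul] at h0
  change 0 ≤ _ + _ + _ + _ * n + _ * m + _ at h0
  nlinarith [h0]

theorem mvar_map {α : Type*} [MeasurableSpace α] (η : Measure α) (f : α → ℝ)
    (hf : Measurable f) :
    mvar (η.map f) = (∫ q, f q ^ 2 ∂η) - (∫ q, f q ∂η) ^ 2 := by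
  unfold mvar
  rw [integral_map hf.aemeasurable (by fun_prop), integral_map hf.aemeasurable (by fun_prop)]

theorem mvar_lin (μ : Measure ℝ) (a : ℝ) :
    mvar (μ.map fun x => a * x) = a ^ 2 * mvar μ := by
  rw [mvar_map _ _ (by fun_prop)]
  unfold mvar
  have h : ∫ q, a * q ∂μ = a * ∫ t, t ∂μ := integral_const_mul a _
  simp only [mul_pow, integral_const_mul]
  rw [h]
  ring

/-- among all (possibly randomized) reinsurance treaties whose
reinsured amount has variance `c`, the retained variance is at least
`(√V − √c)²` where `V = Var(μ) > 0`; equality holds for the quota-share treaty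
`(Id, x ↦ a·x)_#μ` with `a = √(c/V)`, which is a treaty with reinsured
variance `c`. -/
theorem stmt14 (μ : Measure ℝ) [IsProbabilityMeasure μ]
    (hμ : μ (Ici 0) = 1)
    (hmom : Integrable (fun x : ℝ => x ^ 2) μ)
    (hV : 0 < mvar μ) (c : ℝ) (hc0 : 0 ≤ c) (hcV : c ≤ mvar μ) :
    (∀ η : Measure (ℝ × ℝ), IsProbabilityMeasure η → η.map Prod.fst = μ →
      η {q : ℝ × ℝ | 0 ≤ q.2 ∧ q.2 ≤ q.1} = 1 →
      mvar (η.map Prod.snd) = c →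
      (Real.sqrt (mvar μ) - Real.sqrt c) ^ 2 ≤ mvar (η.map fun q : ℝ × ℝ => q.1 - q.2)) ∧
    (μ.map fun x : ℝ => (x, Real.sqrt (c / mvar μ) * x)).map Prod.fst = μ ∧
    (μ.map fun x : ℝ => (x, Real.sqrt (c / mvar μ) * x))
      {q : ℝ × ℝ | 0 ≤ q.2 ∧ q.2 ≤ q.1} = 1 ∧
    mvar ((μ.map fun x : ℝ => (x, Real.sqrt (c / mvar μ) * x)).map Prod.snd) = c ∧
    mvar ((μ.map fun x : ℝ => (x, Real.sqrt (c / mvar μ) * x)).map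
      fun q : ℝ × ℝ => q.1 - q.2) = (Real.sqrt (mvar μ) - Real.sqrt c) ^ 2 := by
  have hmeas : MeasurableSet {q : ℝ × ℝ | 0 ≤ q.2 ∧ q.2 ≤ q.1} :=
    (measurableSet_le measurable_const measurable_snd).inter
      (measurableSet_le measurable_snd measurable_fst)
  have hsV : Real.sqrt (mvar μ) ^ 2 = mvar μ := Real.sq_sqrt hV.le
  have hsc : Real.sqrt c ^ 2 = c := Real.sq_sqrt hc0
  have hV' : 0 < Real.sqrt (mvar μ) := Real.sqrt_pos.2 hV
  have ha : Real.sqrt (c / mvar μ) = Real.sqrt c / Real.sqrt (mvar μ) := Real.sqrt_div hc0 _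
  have hg : Measurable fun x : ℝ => (x, Real.sqrt (c / mvar μ) * x) := by fun_prop
  refine ⟨?_, ?_, ?_, ?_, ?_⟩
  · intro η hη h1 hsupp h2
    have hX : MemLp (fun q : ℝ × ℝ => q.1) 2 η := by
      rw [memLp_two_iff_integrable_sq (by fun_prop)]
      rw [← h1] at hmom
      exact hmom.comp_measurable measurable_fst
    have hae : ∀ᵐ q ∂η, 0 ≤ q.2 ∧ q.2 ≤ q.1 := (prob_compl_eq_zero_iff hmeas).2 hsupp
    have hY : MemLp (fun q : ℝ × ℝ => q.2) 2 η := by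
      refine hX.mono (by fun_prop) ?_
      filter_upwards [hae] with q hq
      rw [Real.norm_of_nonneg hq.1, Real.norm_of_nonneg (hq.1.trans hq.2)]
      exact hq.2
    have key := sq_int_le η _ _ hX hY
    have hVe : mvar μ = (∫ q, q.1 ^ 2 ∂η) - (∫ q, q.1 ∂η) ^ 2 := by
      rw [← mvar_map η Prod.fst measurable_fst, h1]
    rw [mvar_map η Prod.snd measurable_snd] at h2
    rw [mvar_map _ _ (by fun_prop)]
    have iX := hX.integrable (by norm_num)
    have iY := hY.integrable (by norm_num)
    have iX2 := hX.integrable_sq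
    have iY2 := hY.integrable_sq
    have iXY : Integrable (fun q : ℝ × ℝ => q.1 * q.2) η := hX.integrable_mul hY
    have e : (fun q : ℝ × ℝ => (q.1 - q.2) ^ 2) =
        fun q => q.1 ^ 2 + (-2) * (q.1 * q.2) + q.2 ^ 2 := by funext q; ring
    rw [e, integral_add (by fun_prop) (by fun_prop), integral_add (by fun_prop) (by fun_prop),
      integral_const_mul, integral_sub iX iY]
    rw [← hVe, h2] at key
    set C := (∫ q, q.1 * q.2 ∂η) - (∫ q, q.1 ∂η) * (∫ q, q.2 ∂η) with hC
    have k1 := key (C / mvar μ)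
    have k2 : C ^ 2 ≤ mvar μ * c := by
      have : c - 2 * (C / mvar μ) * C + (C / mvar μ) ^ 2 * mvar μ = c - C ^ 2 / mvar μ := by
        field_simp; ring
      rw [this] at k1
      have := (div_le_iff₀ hV).1 (sub_nonneg.1 k1)
      linarith
    have k3 : C ≤ Real.sqrt (mvar μ) * Real.sqrt c := by
      refine le_trans (le_abs_self C) (abs_le_of_sq_le_sq ?_ ?_)
      · rw [mul_pow, hsV, hsc]; exact k2
      · positivity
    nlinarith [k3]
  · rw [Measure.map_map measurable_fst hg]
    exact Measure.map_id
  · rw [Measure.map_apply hg hmeas]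
    have h0 : ∀ᵐ x ∂μ, x ∈ Ici (0:ℝ) := (prob_compl_eq_zero_iff measurableSet_Ici).2 hμ
    refine (prob_compl_eq_zero_iff (hg hmeas)).1 ?_
    change ∀ᵐ x ∂μ, 0 ≤ Real.sqrt (c / mvar μ) * x ∧ Real.sqrt (c / mvar μ) * x ≤ x
    filter_upwards [h0] with x hx
    have hx : 0 ≤ x := hx
    have : Real.sqrt (c / mvar μ) ≤ 1 := Real.sqrt_le_one.2 ((div_le_one hV).2 hcV)
    exact ⟨by positivity, mul_le_of_le_one_left hx this⟩
  · rw [Measure.map_map measurable_snd hg]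
    change mvar (μ.map fun x => Real.sqrt (c / mvar μ) * x) = c
    rw [mvar_lin, Real.sq_sqrt (by positivity)]
    field_simp
  · rw [Measure.map_map (by fun_prop) hg]
    have : ((fun q : ℝ × ℝ => q.1 - q.2) ∘ fun x : ℝ => (x, Real.sqrt (c / mvar μ) * x)) =
        fun x => (1 - Real.sqrt (c / mvar μ)) * x := by
      funext x; simp only [Function.comp]; ring
    rw [this, mvar_lin, ha]
    nth_rw 2 [← hsV]
    field_simp
end
end

section
/- Let 0 < β₁ < β₂ < ⋯ < βₙ, let v* ≥ 0, and let x ∈ ℝ₊ⁿ satisfy Σ_{j=1}^n x_j > v*. Then the linear function y ↦ Σ_{i=1}^n βᵢ yᵢ has a unique minimizer on the set { y ∈ ℝ₊ⁿ : 0 ≤ yᵢ ≤ xᵢ for all i, Σ_{i=1}^n yᵢ = Σ_{i=1}^n xᵢ − v* }, and this minimizer is y*(x) with components y*ᵢ = min( (Σ_{j=i}^n x_j − v*)₊ , xᵢ ) for i = 1,…,n−1 and y*ₙ = (xₙ − v*)₊. Equivalently, writing i₀ for the index with Σ_{j=i₀+1}^n x_j ≤ v* < Σ_{j=i₀}^n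 x_j, one has y* = (x₁, …, x_{i₀−1}, Σ_{j=i₀}^n x_j − v*, 0, …, 0). -/
open Finset

/-- for `0 < β₁ < ⋯ < βₙ`, `v* ≥ 0` and `x ∈ ℝ₊ⁿ` with
`Σ xⱼ > v*`, the linear function `y ↦ Σ βᵢ yᵢ` has a unique minimizer on
`{y : 0 ≤ y ≤ x, Σ yᵢ = Σ xᵢ − v*}`, given by
`y*ᵢ = min( (Σ_{j≥i} xⱼ − v*)₊ , xᵢ )` for `i < n` and `y*ₙ = (xₙ − v*)₊`. -/
theorem stmt15 (n : ℕ) (β : Fin n → ℝ) (hβpos : ∀ i, 0 < β i) (hβ : StrictMono β)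
    (v : ℝ) (hv : 0 ≤ v) (x : Fin n → ℝ) (hx : ∀ i, 0 ≤ x i)
    (hsum : v < ∑ i, x i)
    (ys : Fin n → ℝ)
    (hys : ∀ i : Fin n, ys i =
      if (i : ℕ) + 1 = n then max (x i - v) 0
      else min (max ((∑ j ∈ Finset.Ici i, x j) - v) 0) (x i)) :
    ((∀ i, 0 ≤ ys i ∧ ys i ≤ x i) ∧ ∑ i, ys i = ∑ i, x i - v) ∧
    ∀ y : Fin n → ℝ, ((∀ i, 0 ≤ y i ∧ y i ≤ x i) ∧ ∑ i, y i = ∑ i, x i - v) →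
      y ≠ ys → ∑ i, β i * ys i < ∑ i, β i * y i := by
  classical
  obtain ⟨T, hT⟩ : ∃ T : ℕ → ℝ, ∀ k, T k = ∑ j : Fin n, if k ≤ (j : ℕ) then x j else 0 :=
    ⟨_, fun _ => rfl⟩
  have hT0 : T 0 = ∑ j, x j := by rw [hT]; simp
  have hTn : T n = 0 := by
    rw [hT]
    refine Finset.sum_eq_zero fun j _ => ?_
    rw [if_neg (by omega)]
  have hTanti : ∀ a b, a ≤ b → T b ≤ T a := by
    intro a b hab
    rw [hT, hT]
    refine Finset.sum_le_sum fun j _ => ?_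
    have := hx j
    split_ifs <;> first | omega | linarith
  have hTnn : ∀ a, 0 ≤ T a := by
    intro a
    rw [hT]
    refine Finset.sum_nonneg fun j _ => ?_
    have := hx j
    split_ifs <;> linarith
  have hTs : ∀ i : Fin n, T i = x i + T (i + 1) := by
    intro i
    have h1 : x i = ∑ j : Fin n, if j = i then x j else 0 := by simp
    rw [h1, hT, hT, ← Finset.sum_add_distrib]
    refine Finset.sum_congr rfl fun j _ => ?_
    have : j = i ↔ (j : ℕ) = i := Fin.ext_iff
    split_ifs <;> first | omega | simp
  have hIci : ∀ i : Fin n, ∑ j ∈ Finset.Ici i, x j = T i := by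
    intro i
    rw [hT, ← Finset.sum_filter]
    refine Finset.sum_congr ?_ fun _ _ => rfl
    ext j
    simp
  have hy : ∀ i : Fin n, ys i = max (T i - v) 0 - max (T (i + 1) - v) 0 := by
    intro i
    have h1 := hTs i
    have h2 := hx i
    have h3 := hTnn (i + 1)
    rw [hys, hIci]
    split_ifs with h
    · rw [h, hTn] at h1 ⊢
      rw [h1, max_eq_right (by linarith : (0:ℝ) - v ≤ 0)]
      simp
    · rcases le_total v (T (i + 1)) with h4 | h4
      · rw [max_eq_left (by linarith), max_eq_left (by linarith), min_eq_right (by linarith)]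
        linarith
      · rw [max_eq_right (by linarith : T (i + 1) - v ≤ 0), sub_zero]
        exact min_eq_left (max_le (by linarith) h2)
  have hbox : ∀ i, 0 ≤ ys i ∧ ys i ≤ x i := by
    intro i
    have h1 := hTs i
    have h2 := hx i
    rw [hy]
    rcases max_cases (T i - v) 0 with h | h <;> rcases max_cases (T (i + 1) - v) 0 with h' | h' <;>
      constructor <;> linarith
  have hsy : ∑ i, ys i = ∑ i, x i - v := by
    rw [Finset.sum_congr rfl fun i _ => hy i,
      Fin.sum_univ_eq_sum_range (fun k => max (T k - v) 0 - max (T (k + 1) - v) 0) n,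
      Finset.sum_range_sub' (fun k => max (T k - v) 0), hTn, hT0, max_eq_left (by linarith),
      max_eq_right (by linarith)]
    ring
  refine ⟨⟨hbox, hsy⟩, ?_⟩
  rintro y ⟨hyb, hysum⟩ hne
  have hex : ∃ k, T k ≤ v := ⟨n, by rw [hTn]; exact hv⟩
  obtain ⟨k, hk, hmin⟩ : ∃ k, T k ≤ v ∧ ∀ m < k, v < T m :=
    ⟨Nat.find hex, Nat.find_spec hex, fun m hm => not_le.mp (Nat.find_min hex hm)⟩
  have hk0 : k ≠ 0 := by
    rintro rfl
    linarith
  have hkn : k ≤ n := by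
    by_contra h
    have := hmin n (by omega)
    linarith
  obtain ⟨m, rfl⟩ := Nat.exists_eq_succ_of_ne_zero hk0
  let p : Fin n := ⟨m, by omega⟩
  have hlt : ∀ i, i < p → ys i = x i := by
    intro i hi
    have hi' : (i : ℕ) < m := hi
    have h1 := hTs i
    have h2 := hmin i (by omega)
    have h3 := hmin (i + 1) (by omega)
    rw [hy, max_eq_left (by linarith), max_eq_left (by linarith)]
    linarith
  have hgt : ∀ i, p < i → ys i = 0 := by
    intro i hi
    have hi' : m < (i : ℕ) := hi
    have h2 := hTanti (m + 1) i (by omega)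
    have h3 := hTanti (m + 1) (i + 1) (by omega)
    have hk' : T (m + 1) ≤ v := hk
    rw [hy, max_eq_right (by linarith), max_eq_right (by linarith)]
    simp
  have hterm : ∀ i ∈ Finset.univ, 0 ≤ (β i - β p) * (y i - ys i) := by
    intro i _
    rcases lt_trichotomy i p with h | h | h
    · have := hβ h
      have := (hyb i).2
      rw [hlt i h]
      exact mul_nonneg_of_nonpos_of_nonpos (by linarith) (by linarith)
    · simp [h]
    · have := hβ h
      have := (hyb i).1
      rw [hgt i h]
      exact mul_nonneg (by linarith) (by linarith)
  have hid : ∑ i, (β i - β p) * (y i - ys i) = ∑ i, β i * y i - ∑ i, β i * ys i := by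
    have : ∀ i, (β i - β p) * (y i - ys i) = β i * y i - β i * ys i - β p * (y i - ys i) := by
      intro i; ring
    simp only [this, Finset.sum_sub_distrib, ← Finset.mul_sum, hsy, hysum]
    ring
  by_contra hcon
  have hz : ∑ i, (β i - β p) * (y i - ys i) = 0 :=
    le_antisymm (by rw [hid]; linarith) (Finset.sum_nonneg hterm)
  have hall := (Finset.sum_eq_zero_iff_of_nonneg hterm).1 hz
  have hoff : ∀ i, i ≠ p → y i - ys i = 0 := by
    intro i hi
    rcases mul_eq_zero.1 (hall i (Finset.mem_univ i)) with h | h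
    · exact absurd (hβ.injective (sub_eq_zero.1 h)) hi
    · exact h
  have hp : y p - ys p = 0 := by
    rw [← Finset.sum_eq_single_of_mem (f := fun i => y i - ys i) p (Finset.mem_univ p)
      (fun i _ hi => hoff i hi), Finset.sum_sub_distrib, hsy, hysum]
    ring
  apply hne
  funext i
  by_cases h : i = p
  · rw [h]; linarith
  · linarith [hoff i h]
end

section
/- Let 0 < β₁ < β₂ < ⋯ < βₙ, λ > 0, σ ∈ ℝ, and x ∈ ℝ₊ⁿ. Define h(y) = Σ_{i=1}^n βᵢ yᵢ + λ ( Σ_{i=1}^n (xᵢ − yᵢ) )² − 2λσ Σ_{i=1}^n (xᵢ − yᵢ) for y ∈ [0,x]. Then the vector y*(x) with components y*ᵢ = min( ( Σ_{j=i}^n x_j − βᵢ/(2λ) − σ )₊ , xᵢ ), i = 1, …, n, is a minimizer of h over the box [0,x]. -/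
open Finset

/-- for `0 < β₁ < ⋯ < βₙ`, `λ > 0`, `σ ∈ ℝ` and `x ∈ ℝ₊ⁿ`, the
vector `y*` with components
`y*ᵢ = min( ( Σ_{j≥i} xⱼ − βᵢ/(2λ) − σ )₊ , xᵢ )`
is a minimizer over the box `[0,x]` of the Lagrangian
`h(y) = Σᵢ βᵢ yᵢ + λ (Σᵢ (xᵢ − yᵢ))² − 2λσ Σᵢ (xᵢ − yᵢ)`.
(Indices range over `Fin (n+1)` so that there is at least one risk.) -/
theorem stmt17 (n : ℕ) (β : Fin (n + 1) → ℝ) (hβpos : ∀ i, 0 < β i)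
    (hβ : StrictMono β) (lam σ : ℝ) (hlam : 0 < lam)
    (x : Fin (n + 1) → ℝ) (hx : ∀ i, 0 ≤ x i)
    (ys : Fin (n + 1) → ℝ)
    (hys : ∀ i : Fin (n + 1), ys i =
      min (max ((∑ j ∈ Finset.Ici i, x j) - β i / (2 * lam) - σ) 0) (x i)) :
    (∀ i, 0 ≤ ys i ∧ ys i ≤ x i) ∧
    ∀ y : Fin (n + 1) → ℝ, (∀ i, 0 ≤ y i ∧ y i ≤ x i) →
      ((∑ i, β i * ys i) + lam * (∑ i, (x i - ys i)) ^ 2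
          - 2 * lam * σ * (∑ i, (x i - ys i)))
        ≤ ((∑ i, β i * y i) + lam * (∑ i, (x i - y i)) ^ 2
          - 2 * lam * σ * (∑ i, (x i - y i))) := by
  have hb : ∀ i, 0 ≤ ys i ∧ ys i ≤ x i := by
    intro i
    rw [hys i]
    exact ⟨le_min (le_max_right _ _) (hx i), min_le_right _ _⟩
  refine ⟨hb, ?_⟩
  have hS : ∀ (f : Fin (n + 1) → ℝ) (i : Fin (n + 1)),
      ∑ j ∈ Finset.Ici i, f j = f i + ∑ j ∈ Finset.Ioi i, f j := by
    intro f i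
    rw [← Finset.Ioi_insert, Finset.sum_insert (by simp)]
  have hc : ∀ i, 2 * lam * (β i / (2 * lam)) = β i := by
    intro i
    field_simp
  have hcm : ∀ i j, i ≤ j → β i / (2 * lam) ≤ β j / (2 * lam) := by
    intro i j hij
    have := hβ.monotone hij
    gcongr
  set T := ∑ i, (x i - ys i) with hT
  have h1 : ∀ i, 0 < ys i → β i / (2 * lam) + σ ≤ T := by
    intro i hi
    obtain ⟨j, hj, hmax⟩ := Finset.exists_max_image
      (Finset.univ.filter (fun k => 0 < ys k)) id ⟨i, by simpa using hi⟩
    simp only [Finset.mem_filter, Finset.mem_univ, true_and, id] at hj hmax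
    have hij := hcm i j (hmax i hi)
    have hle : ∑ k ∈ Finset.Ici j, (x k - ys k) ≤ T :=
      Finset.sum_le_sum_of_subset_of_nonneg (Finset.subset_univ _)
        (fun k _ _ => sub_nonneg.2 (hb k).2)
    have heq : ∑ k ∈ Finset.Ioi j, (x k - ys k) = ∑ k ∈ Finset.Ioi j, x k := by
      refine Finset.sum_congr rfl fun k hk => ?_
      have hk' : j < k := by simpa using hk
      have : ¬ 0 < ys k := fun h => absurd (hmax k h) (not_le.2 hk')
      linarith [(hb k).1]
    rw [hS, heq] at hle
    have hyj := hys j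
    rw [hS] at hyj
    have hm : ys j ≤ max (x j + ∑ k ∈ Finset.Ioi j, x k - β j / (2 * lam) - σ) 0 := by
      rw [hyj]; exact min_le_left _ _
    rcases le_max_iff.1 hm with h | h <;> linarith
  have h2 : ∀ i, ys i < x i → T ≤ β i / (2 * lam) + σ := by
    intro i hi
    obtain ⟨j, hj, hmin⟩ := Finset.exists_min_image
      (Finset.univ.filter (fun k => ys k < x k)) id ⟨i, by simpa using hi⟩
    simp only [Finset.mem_filter, Finset.mem_univ, true_and, id] at hj hmin
    have hij := hcm j i (hmin i hi)
    have hle : ∑ k ∈ Finset.Ici j, (x k - ys k) = T := by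
      refine Finset.sum_subset (Finset.subset_univ _) fun k _ hk => ?_
      have hk' : k < j := by simpa using hk
      have : ¬ ys k < x k := fun h => absurd (hmin k h) (not_le.2 hk')
      linarith [(hb k).2]
    have heq : ∑ k ∈ Finset.Ioi j, (x k - ys k) ≤ ∑ k ∈ Finset.Ioi j, x k :=
      Finset.sum_le_sum fun k _ => by linarith [(hb k).1]
    rw [hS] at hle
    have hyj := hys j
    rw [hS] at hyj
    rcases min_le_iff.1 hyj.ge with h | h
    · have := (le_max_left _ _).trans h
      linarith
    · linarith
  intro y hy
  have hT' : ∑ i, (x i - y i) = T - ∑ i, (y i - ys i) := by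
    rw [hT, ← Finset.sum_sub_distrib]
    exact Finset.sum_congr rfl fun i _ => by ring
  have hk : 0 ≤ ∑ i, (β i - 2 * lam * T + 2 * lam * σ) * (y i - ys i) := by
    refine Finset.sum_nonneg fun i _ => ?_
    have e : β i - 2 * lam * T + 2 * lam * σ = 2 * lam * (β i / (2 * lam) + σ - T) := by
      rw [← hc i]; field_simp; ring
    rw [e]
    rcases lt_trichotomy (y i) (ys i) with h | h | h
    · have := h1 i (lt_of_le_of_lt (hy i).1 h)
      exact mul_nonneg_of_nonpos_of_nonpos
        (mul_nonpos_of_nonneg_of_nonpos (by positivity) (by linarith)) (by linarith)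
    · simp [h]
    · have := h2 i (lt_of_lt_of_le h (hy i).2)
      exact mul_nonneg (mul_nonneg (by positivity) (by linarith)) (by linarith)
  clear_value T
  have hsplit : ∑ i, (β i - 2 * lam * T + 2 * lam * σ) * (y i - ys i)
      = (∑ i, β i * y i) - (∑ i, β i * ys i)
        + (- 2 * lam * T + 2 * lam * σ) * ∑ i, (y i - ys i) := by
    rw [Finset.mul_sum, ← Finset.sum_sub_distrib, ← Finset.sum_add_distrib]
    exact Finset.sum_congr rfl fun i _ => by ring
  rw [hsplit] at hk
  rw [hT']
  nlinarith [mul_nonneg hlam.le (sq_nonneg (∑ i, (y i - ys i)))]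
end
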